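/- arXiv:1504.06522 — 3 statements merged into one kernel-verified Lean document; each statement's English description precedes it below -/
import Mathlib

section
/- Fix 1 <= i <= n and m in Z_{>=0}. Let p in D be a Dyck path and let s in Z_{>=0}^{R^+} be a multi-exponent with s_beta = 0 for all beta not in p, and suppose sum_{beta in p} s_beta > M_p(m*omega_i). Then there exist complex constants c_t such that X^s + sum_{t ≺ s} c_t X^t belongs to the ideal I_{m*omega_i}. -/
open scoped Pointwise

/-- A single step in a Dyck path: `α_{p,q} → α_{p,q+1}` or `α_{p,q} → α_{p+1,q}`. -/
def RootStep (a b : ℕ × ℕ) : Prop :=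
  (b.1 = a.1 ∧ b.2 = a.2 + 1) ∨ (b.1 = a.1 + 1 ∧ b.2 = a.2)

/-- `inR n i (p,q)` means that `α_{p,q}` is a positive root of `B_n`
(`1 ≤ p ≤ n`, `p ≤ q ≤ 2n-p`) belonging to `R_i^+`, i.e. `p ≤ i ≤ q`. -/
def inR (n i : ℕ) (a : ℕ × ℕ) : Prop :=
  1 ≤ a.1 ∧ a.1 ≤ i ∧ i ≤ a.2 ∧ a.1 + a.2 ≤ 2 * n

/-- A type 1 Dyck path for `R_i^+` of `B_n`, recorded as the list of its roots. -/
def IsType1 (n i : ℕ) (L : List (ℕ × ℕ)) : Prop :=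
  L ≠ [] ∧ L.Chain' RootStep ∧ (∀ x ∈ L, inR n i x) ∧
    ((L.head? = some (1, i) ∧ L.getLast? = some (i, 2 * n - i - 1)) ∨
     (L.head? = some (1, i + 1) ∧ L.getLast? = some (i, 2 * n - i)))

/-- A type 2 (double) Dyck path for `R_i^+` of `B_n`, recorded as the pair of lists of
roots of its two constituent single paths. -/
def IsType2 (n i : ℕ) (L1 L2 : List (ℕ × ℕ)) : Prop :=
  ∃ j : ℕ, 1 ≤ j ∧ j < i ∧
    L1 ≠ [] ∧ L2 ≠ [] ∧ L1.Chain' RootStep ∧ L2.Chain' RootStep ∧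
    (∀ x ∈ L1, inR n i x) ∧ (∀ x ∈ L2, inR n i x) ∧
    L1.head? = some (1, i) ∧ L2.head? = some (2, i) ∧
    L1.getLast? = some (j, 2 * n - j) ∧ L2.getLast? = some (j + 1, 2 * n - j - 1) ∧
    (∀ x, ¬(x ∈ L1 ∧ x ∈ L2))

/-- The constant `c_i`: `1` if `i = 1` or `i = n`, and `2` if `2 ≤ i ≤ n-1`. -/
def cB (n i : ℕ) : ℕ := if i = 1 ∨ i = n then 1 else 2

/-- `SD n i m` is the set `S(D, m·ω_i)` of lattice points of the Dyck-path polytope: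
multi-exponents `s` supported on `R_i^+` with `∑_{β ∈ p} s_β ≤ m` for every type 1
Dyck path `p` and `∑_{β ∈ p} s_β ≤ m·c_i` for every type 2 Dyck path `p`.
(Elements of a Dyck path are pairwise distinct, so summation over the recording
lists agrees with summation over the underlying set of roots.) -/
def SD (n i m : ℕ) : Set ((ℕ × ℕ) → ℕ) :=
  {s | (∀ β, ¬ inR n i β → s β = 0) ∧
       (∀ L, IsType1 n i L → (L.map s).sum ≤ m) ∧
       (∀ L1 L2, IsType2 n i L1 L2 → ((L1 ++ L2).map s).sum ≤ m * cB n i)}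

/-- `isBRoot n (p,q)`: `α_{p,q}` is a positive root of `B_n`, i.e.
`1 ≤ p ≤ n` and `p ≤ q ≤ 2n - p`. -/
def isBRoot (n : ℕ) (a : ℕ × ℕ) : Prop :=
  1 ≤ a.1 ∧ a.1 ≤ n ∧ a.1 ≤ a.2 ∧ a.1 + a.2 ≤ 2 * n

/-- The coefficient of the simple root `α_j` in the root `α_{p,q}` of `B_n`
(an element of the root lattice, recorded coordinatewise). -/
def rootVec (n : ℕ) (a : ℕ × ℕ) (j : ℕ) : ℤ :=
  if a.2 ≤ n then (if a.1 ≤ j ∧ j ≤ a.2 then 1 else 0)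
  else if a.1 ≤ j ∧ j ≤ 2 * n - a.2 then 1
  else if 2 * n - a.2 < j ∧ j ≤ n then 2 else 0

/-- The total order `≺` on positive roots: `α_{p,q} ≺ α_{s,t}` iff `q < t`, or
`q = t` and `p > s`. -/
def rootLT (a b : ℕ × ℕ) : Prop := a.2 < b.2 ∨ (a.2 = b.2 ∧ b.1 < a.1)

/-- The induced homogeneous reverse lexicographic order on multi-exponents:
`expLT s t` means `s ≺ t`, i.e. `t ≻ s`: either the total degree of `s` is smaller,
or the degrees agree and `t_β < s_β` at the `≺`-smallest root `β` with `s_β ≠ t_β`. -/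
def expLT (s t : (ℕ × ℕ) →₀ ℕ) : Prop :=
  (s.sum fun _ v => v) < (t.sum fun _ v => v) ∨
  ((s.sum fun _ v => v) = (t.sum fun _ v => v) ∧
    ∃ β, t β < s β ∧ ∀ γ, rootLT γ β → s γ = t γ)

/-- The differential operator `∂_ν`: the unique `ℂ`-linear derivation of
`S(n⁻) = ℂ[x_{-β} : β ∈ R⁺]` with `∂_ν x_{-β} = x_{-(β-ν)}` if `β - ν ∈ R⁺`
(difference taken in the root lattice) and `∂_ν x_{-β} = 0` otherwise. -/
noncomputable def dOp (n : ℕ) (ν : ℕ × ℕ) :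
    Derivation ℂ (MvPolynomial (ℕ × ℕ) ℂ) (MvPolynomial (ℕ × ℕ) ℂ) :=
  MvPolynomial.mkDerivation ℂ fun β =>
    letI := Classical.propDecidable
    if h : ∃ γ, isBRoot n γ ∧ ∀ j, rootVec n γ j = rootVec n β j - rootVec n ν j
    then MvPolynomial.X h.choose else 0

/-- The ideal `I_{m·ω_i}`: the smallest ideal of `S(n⁻)` containing
`x_{-θ}^{c_i·m+1}` (θ = α_{1,2n-1} the highest root), `x_{-α_{1,2n-i}}^{m+1}`, and
`x_{-β}` for every `β ∈ R⁺ \ R_i⁺`, and stable under `∂_ν` for every `ν ∈ R⁺`. -/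
noncomputable def Ilam (n i m : ℕ) : Ideal (MvPolynomial (ℕ × ℕ) ℂ) :=
  sInf {I |
    MvPolynomial.X ((1 : ℕ), 2 * n - 1) ^ (cB n i * m + 1) ∈ I ∧
    MvPolynomial.X ((1 : ℕ), 2 * n - i) ^ (m + 1) ∈ I ∧
    (∀ β, isBRoot n β → ¬ inR n i β → MvPolynomial.X β ∈ I) ∧
    (∀ ν, isBRoot n ν → ∀ f ∈ I, dOp n ν f ∈ I)}

/-- `RootDiff n ν β γ`: the positive root `γ` is the difference `β - ν` in the root lattice. -/
def RootDiff (n : ℕ) (ν β γ : ℕ × ℕ) : Prop :=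
  isBRoot n γ ∧ ∀ j, rootVec n γ j = rootVec n β j - rootVec n ν j

/-- Functions that are odd under the involution `k ↦ 2n + 2 - k`. They pair with the root lattice
in such a way that `α_{p,q}` is sent to `U p + U (2n + 1 - q)`. -/
def OddFun (n : ℕ) (U : ℕ → ℤ) : Prop :=
  ∀ k, k ≤ 2 * n + 2 → U (2 * n + 2 - k) = -U k

lemma oddFun_linear (n : ℕ) : OddFun n fun k => (n : ℤ) + 1 - k := by
  intro k hk
  push_cast [Nat.cast_sub hk]
  ring

/-- The signed indicator of `c`: `1` at `c`, and `-1` at the opposite `2n + 2 - c`. -/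
def oddDelta (n c k : ℕ) : ℤ :=
  (if k = c then 1 else 0) - (if k + c = 2 * n + 2 then 1 else 0)

lemma oddFun_oddDelta {n : ℕ} (c : ℕ) (hc : c ≤ n) : OddFun n (oddDelta n c) := by
  intro k hk
  unfold oddDelta
  split_ifs <;> omega

lemma oddDelta_self {n c : ℕ} (hc : c ≤ n) : oddDelta n c c = 1 := by
  unfold oddDelta
  split_ifs <;> omega

lemma oddDelta_nonpos {n c k : ℕ} (h : k ≠ c) : oddDelta n c k ≤ 0 := by
  unfold oddDelta
  split_ifs <;> omega

lemma oddDelta_nonneg {n c k : ℕ} (h : k + c ≠ 2 * n + 2) : 0 ≤ oddDelta n c k := by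
  unfold oddDelta
  split_ifs <;> omega

lemma oddDelta_eq_zero {n c k : ℕ} (h : k ≠ c) (h' : k + c ≠ 2 * n + 2) :
    oddDelta n c k = 0 :=
  le_antisymm (oddDelta_nonpos h) (oddDelta_nonneg h')

lemma rootVec_eq {n p q : ℕ} (h : isBRoot n (p, q)) (j : ℕ) :
    rootVec n (p, q) j = if 1 ≤ j ∧ j ≤ n then
      (if p ≤ j then 1 else 0) + (if 2 * n + 1 - q ≤ j then 1 else 0)
        - (if q + 1 ≤ j then 1 else 0) else 0 := by
  obtain ⟨h1, h2, h3, h4⟩ := h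
  dsimp only at h1 h2 h3 h4
  unfold rootVec
  dsimp only
  split_ifs <;> omega

lemma sum_rootVec_sub_mul {n p q : ℕ} (h : isBRoot n (p, q)) {U : ℕ → ℤ} (hU : OddFun n U) :
    ∑ j ∈ Finset.Icc 1 n, (rootVec n (p, q) j - rootVec n (p, q) (j - 1)) * U j
      = U p + U (2 * n + 1 - q) := by
  obtain ⟨h1, h2, h3, h4⟩ := id h
  dsimp only at h1 h2 h3 h4
  have key : ∀ j ∈ Finset.Icc 1 n,
      (rootVec n (p, q) j - rootVec n (p, q) (j - 1)) * U j
        = (if j = p then U j else 0) + (if j = 2 * n + 1 - q then U j else 0)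
          - (if j = q + 1 then U j else 0) := by
    intro j hj
    rw [Finset.mem_Icc] at hj
    have : rootVec n (p, q) j - rootVec n (p, q) (j - 1)
        = (if j = p then 1 else 0) + (if j = 2 * n + 1 - q then 1 else 0)
          - (if j = q + 1 then 1 else 0) := by
      rw [rootVec_eq h, rootVec_eq h]
      split_ifs <;> omega
    rw [this]
    split_ifs <;> ring
  rw [Finset.sum_congr rfl key, Finset.sum_sub_distrib, Finset.sum_add_distrib,
    Finset.sum_ite_eq', Finset.sum_ite_eq', Finset.sum_ite_eq']
  simp only [Finset.mem_Icc]
  have h0 : U (n + 1) = 0 := by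
    have := hU (n + 1) (by omega)
    rw [show 2 * n + 2 - (n + 1) = n + 1 by omega] at this
    omega
  have hq := hU (q + 1) (by omega)
  rw [show 2 * n + 2 - (q + 1) = 2 * n + 1 - q by omega] at hq
  rw [if_pos ⟨h1, h2⟩]
  rcases lt_trichotomy q n with hlt | rfl | hlt
  · rw [if_neg (by omega), if_pos (by omega), hq]; ring
  · rw [if_neg (by omega), if_neg (by omega), show 2 * q + 1 - q = q + 1 by omega, h0]; ring
  · rw [if_pos (by omega), if_neg (by omega)]; ring

lemma RootDiff.oddFun_eq {n : ℕ} {ν β γ : ℕ × ℕ} (h : RootDiff n ν β γ) (hν : isBRoot n ν)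
    (hβ : isBRoot n β) {U : ℕ → ℤ} (hU : OddFun n U) :
    U γ.1 + U (2 * n + 1 - γ.2) + (U ν.1 + U (2 * n + 1 - ν.2))
      = U β.1 + U (2 * n + 1 - β.2) := by
  rw [← sum_rootVec_sub_mul h.1 hU, ← sum_rootVec_sub_mul hν hU, ← sum_rootVec_sub_mul hβ hU,
    ← Finset.sum_add_distrib]
  refine Finset.sum_congr rfl fun j _ => ?_
  have h1 := h.2 j
  have h2 := h.2 (j - 1)
  simp only [Prod.mk.eta] at *
  rw [h1, h2]
  ring

lemma isBRoot.ext {n : ℕ} {γ γ' : ℕ × ℕ} (h : isBRoot n γ) (h' : isBRoot n γ')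
    (hv : ∀ j, rootVec n γ j = rootVec n γ' j) : γ = γ' := by
  obtain ⟨p, q⟩ := γ
  obtain ⟨p', q'⟩ := γ'
  have key : ∀ U, OddFun n U → U p + U (2 * n + 1 - q) = U p' + U (2 * n + 1 - q') := by
    intro U hU
    rw [← sum_rootVec_sub_mul h hU, ← sum_rootVec_sub_mul h' hU]
    exact Finset.sum_congr rfl fun j _ => by rw [hv, hv]
  obtain ⟨h1, h2, h3, h4⟩ := h
  obtain ⟨h1', h2', h3', h4'⟩ := h'
  dsimp only at h1 h2 h3 h4 h1' h2' h3' h4'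
  have k1 := key _ (oddFun_linear n)
  have k2 := key _ (oddFun_oddDelta p h2)
  unfold oddDelta at k2
  rw [Prod.mk.injEq]
  split_ifs at k2 <;> omega

lemma RootDiff.unique {n : ℕ} {ν β γ γ' : ℕ × ℕ} (h : RootDiff n ν β γ)
    (h' : RootDiff n ν β γ') : γ = γ' :=
  h.1.ext h'.1 fun j => (h.2 j).trans (h'.2 j).symm

lemma dOp_X_of_rootDiff {n : ℕ} {ν β γ : ℕ × ℕ} (h : RootDiff n ν β γ) :
    dOp n ν (MvPolynomial.X β) = MvPolynomial.X γ := by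
  have hex : ∃ γ, isBRoot n γ ∧ ∀ j, rootVec n γ j = rootVec n β j - rootVec n ν j := ⟨γ, h⟩
  unfold dOp
  rw [MvPolynomial.mkDerivation_X, dif_pos hex]
  exact congrArg _ (RootDiff.unique hex.choose_spec h)

lemma dOp_X_of_not {n : ℕ} {ν β : ℕ × ℕ} (h : ¬ ∃ γ, RootDiff n ν β γ) :
    dOp n ν (MvPolynomial.X β) = 0 := by
  unfold dOp
  rw [MvPolynomial.mkDerivation_X]
  exact dif_neg h

section Dominates

open scoped ComplexOrder

/-- `Dominates I R P s`: the ideal `I` contains a polynomial with nonnegative coefficients, whose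
monomials involve only variables in `R`, in which the monomial `s` occurs and all of whose monomials
satisfy `P`. Monomials are recorded as multisets of variables. -/
def Dominates {σ : Type*} [DecidableEq σ] (I : Ideal (MvPolynomial σ ℂ)) (R : σ → Prop)
    (P : Multiset σ → Prop) (s : Multiset σ) : Prop :=
  ∃ f ∈ I, (∀ t, 0 ≤ f.coeff t) ∧ f.coeff (Multiset.toFinsupp s) ≠ 0 ∧
    ∀ t, f.coeff (Multiset.toFinsupp t) ≠ 0 → P t ∧ ∀ x ∈ t, R x

lemma Dominates.mono {σ : Type*} [DecidableEq σ] {I : Ideal (MvPolynomial σ ℂ)} {R : σ → Prop}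
    {P Q : Multiset σ → Prop} {s : Multiset σ} (h : Dominates I R P s)
    (hPQ : ∀ t, (∀ x ∈ t, R x) → P t → Q t) : Dominates I R Q s := by
  obtain ⟨f, hf, hpos, hs, hP⟩ := h
  exact ⟨f, hf, hpos, hs, fun t ht => ⟨hPQ t (hP t ht).2 (hP t ht).1, (hP t ht).2⟩⟩

lemma Dominates.self {σ : Type*} [DecidableEq σ] {I : Ideal (MvPolynomial σ ℂ)} {R : σ → Prop}
    {P : Multiset σ → Prop} {s : Multiset σ} (h : Dominates I R P s) : P s ∧ ∀ x ∈ s, R x := by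
  obtain ⟨f, hf, hpos, hs, hP⟩ := h
  exact hP s hs

/-- Monomials that contain a variable of the ideal may be discarded. -/
lemma Dominates.of_filter {σ : Type*} [DecidableEq σ] {I : Ideal (MvPolynomial σ ℂ)}
    {R R' : σ → Prop} {P : Multiset σ → Prop} {s : Multiset σ} (h : Dominates I R P s)
    (hR : ∀ x, R x → ¬ R' x → MvPolynomial.X x ∈ I) (hs : ∀ x ∈ s, R' x) :
    Dominates I R' P s := by
  classical
  obtain ⟨f, hf, hpos, hs0, hP⟩ := h
  set F := f.support.filter fun t => ∀ x ∈ Finsupp.toMultiset t, R' x with hF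
  have hcoeff : ∀ t, (∑ u ∈ F, MvPolynomial.monomial u (f.coeff u)).coeff t
      = if t ∈ F then f.coeff t else 0 := by
    intro t
    rw [MvPolynomial.coeff_sum]
    simp only [MvPolynomial.coeff_monomial]
    rw [Finset.sum_ite_eq']
  refine ⟨∑ u ∈ F, MvPolynomial.monomial u (f.coeff u), ?_, ?_, ?_, ?_⟩
  · have hsplit : f = ∑ u ∈ F, MvPolynomial.monomial u (f.coeff u)
        + ∑ u ∈ f.support.filter fun t => ¬ ∀ x ∈ Finsupp.toMultiset t, R' x,
          MvPolynomial.monomial u (f.coeff u) := by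
      conv_lhs => rw [f.as_sum]
      rw [Finset.sum_filter_add_sum_filter_not]
    have hrest : ∑ u ∈ f.support.filter fun t => ¬ ∀ x ∈ Finsupp.toMultiset t, R' x,
          MvPolynomial.monomial u (f.coeff u) ∈ I := by
      refine Ideal.sum_mem _ fun u hu => ?_
      rw [Finset.mem_filter] at hu
      obtain ⟨hu, hx⟩ := hu
      push Not at hx
      obtain ⟨x, hxu, hx⟩ := hx
      have hRx : R x := by
        refine (hP (Finsupp.toMultiset u) ?_).2 x hxu
        rw [Finsupp.toMultiset_toFinsupp]
        exact MvPolynomial.mem_support_iff.1 hu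
      have hle : Finsupp.single x 1 ≤ u := by
        rw [Finsupp.single_le_iff]
        rw [Finsupp.mem_toMultiset, Finsupp.mem_support_iff] at hxu
        omega
      have : MvPolynomial.monomial u (f.coeff u)
          = MvPolynomial.monomial (u - Finsupp.single x 1) (f.coeff u) * MvPolynomial.X x := by
        rw [MvPolynomial.X, MvPolynomial.monomial_mul, mul_one, tsub_add_cancel_of_le hle]
      rw [this]
      exact I.mul_mem_left _ (hR x hRx hx)
    have := I.sub_mem hf hrest
    rwa [sub_eq_of_eq_add hsplit] at this
  · intro t
    rw [hcoeff]
    split_ifs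
    · exact hpos t
    · exact le_rfl
  · rw [hcoeff, if_pos]
    · exact hs0
    · rw [hF, Finset.mem_filter, Multiset.toFinsupp_toMultiset]
      exact ⟨MvPolynomial.mem_support_iff.2 hs0, hs⟩
  · intro t ht
    rw [hcoeff] at ht
    split_ifs at ht with htF
    · rw [hF, Finset.mem_filter, Multiset.toFinsupp_toMultiset] at htF
      exact ⟨(hP t ht).1, htF.2⟩
    · exact absurd rfl ht

lemma coeff_dOp (n : ℕ) (ν : ℕ × ℕ) (f : MvPolynomial (ℕ × ℕ) ℂ) (t : (ℕ × ℕ) →₀ ℕ) :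
    (dOp n ν f).coeff t = ∑ u ∈ f.support, ∑ β ∈ u.support,
      f.coeff u * (u β * (MvPolynomial.monomial (u - Finsupp.single β 1) 1
        * dOp n ν (MvPolynomial.X β)).coeff t) := by
  conv_lhs => rw [f.as_sum]
  rw [map_sum, MvPolynomial.coeff_sum]
  refine Finset.sum_congr rfl fun u _ => ?_
  have hmon := MvPolynomial.mkDerivation_monomial (R := ℂ)
    (fun β => dOp n ν (MvPolynomial.X β)) u (f.coeff u)
  have hd : MvPolynomial.mkDerivation ℂ (fun β => dOp n ν (MvPolynomial.X β)) = dOp n ν := by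
    refine MvPolynomial.derivation_ext fun β => ?_
    rw [MvPolynomial.mkDerivation_X]
  rw [hd] at hmon
  rw [hmon, MvPolynomial.coeff_smul, Finsupp.sum, MvPolynomial.coeff_sum, smul_eq_mul,
    Finset.mul_sum]
  refine Finset.sum_congr rfl fun β _ => ?_
  rw [smul_eq_mul, ← mul_one (u β : ℂ), ← MvPolynomial.C_mul_monomial, mul_assoc,
    MvPolynomial.coeff_C_mul, mul_one]

lemma monomial_mul_dOp_X_of_rootDiff {n : ℕ} {ν β γ : ℕ × ℕ} (h : RootDiff n ν β γ)
    (u : (ℕ × ℕ) →₀ ℕ) :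
    MvPolynomial.monomial u 1 * dOp n ν (MvPolynomial.X β)
      = MvPolynomial.monomial (u + Finsupp.single γ 1) 1 := by
  rw [dOp_X_of_rootDiff h, MvPolynomial.X, MvPolynomial.monomial_mul, mul_one]

/-- Applying `∂_ν` replaces, in all possible ways, one factor `β` of a monomial by `β - ν`. -/
lemma Dominates.dOp {n : ℕ} {I : Ideal (MvPolynomial (ℕ × ℕ) ℂ)} {R : ℕ × ℕ → Prop}
    {P Q : Multiset (ℕ × ℕ) → Prop} {s : Multiset (ℕ × ℕ)} {ν β γ : ℕ × ℕ}
    (h : Dominates I R P (β ::ₘ s)) (hI : ∀ f ∈ I, dOp n ν f ∈ I) (hβ : RootDiff n ν β γ)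
    (hR : ∀ x, isBRoot n x → ¬ R x → MvPolynomial.X x ∈ I) (hRroot : ∀ x, R x → isBRoot n x)
    (hγ : R γ)
    (hPQ : ∀ t β γ, P (β ::ₘ t) → R β → RootDiff n ν β γ → R γ → Q (γ ::ₘ t)) :
    Dominates I R Q (γ ::ₘ s) := by
  have hRs := h.self.2
  have hterm : ∀ (u t : (ℕ × ℕ) →₀ ℕ) (β : ℕ × ℕ),
      0 ≤ (MvPolynomial.monomial u (1 : ℂ) * _root_.dOp n ν (MvPolynomial.X β)).coeff t := by
    intro u t β
    by_cases hγ : ∃ γ, RootDiff n ν β γ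
    · obtain ⟨γ, hγ⟩ := hγ
      rw [monomial_mul_dOp_X_of_rootDiff hγ, MvPolynomial.coeff_monomial]
      split_ifs
      · exact zero_le_one
      · exact le_rfl
    · rw [dOp_X_of_not hγ, mul_zero, MvPolynomial.coeff_zero]
  have main : Dominates I (isBRoot n) (fun t => (∀ x ∈ t, R x) → Q t) (γ ::ₘ s) := by
    obtain ⟨f, hf, hpos, hs, hP⟩ := h
    have hnonneg : ∀ u t : (ℕ × ℕ) →₀ ℕ, ∀ β, 0 ≤ f.coeff u * (u β *
        (MvPolynomial.monomial (u - Finsupp.single β 1) (1 : ℂ)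
          * _root_.dOp n ν (MvPolynomial.X β)).coeff t) := fun u t β =>
      mul_nonneg (hpos u) (mul_nonneg (Nat.cast_nonneg _) (hterm _ _ _))
    refine ⟨_, hI f hf, ?_, ?_, ?_⟩
    · intro t
      rw [coeff_dOp]
      exact Finset.sum_nonneg fun u _ => Finset.sum_nonneg fun β _ => hnonneg u t β
    · rw [coeff_dOp]
      intro h0
      rw [Finset.sum_eq_zero_iff_of_nonneg
        (fun u _ => Finset.sum_nonneg fun β _ => hnonneg u _ β)] at h0
      have h1 := h0 _ (MvPolynomial.mem_support_iff.2 hs)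
      rw [Finset.sum_eq_zero_iff_of_nonneg (fun β _ => hnonneg _ _ β)] at h1
      have h2 := h1 β (by simp)
      rw [monomial_mul_dOp_X_of_rootDiff hβ, MvPolynomial.coeff_monomial, if_pos] at h2
      · simp only [mul_one, mul_eq_zero, hs, false_or, Nat.cast_eq_zero] at h2
        simp at h2
      · rw [← Multiset.singleton_add, ← Multiset.singleton_add, map_add, map_add,
          Multiset.toFinsupp_singleton, Multiset.toFinsupp_singleton, add_tsub_cancel_left,
          add_comm]
    · intro t ht
      rw [coeff_dOp] at ht
      obtain ⟨u, hu, ht⟩ := Finset.exists_ne_zero_of_sum_ne_zero ht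
      obtain ⟨β', hβ', ht⟩ := Finset.exists_ne_zero_of_sum_ne_zero ht
      by_cases hγ' : ∃ γ, RootDiff n ν β' γ
      · obtain ⟨γ', hγ'⟩ := hγ'
        rw [monomial_mul_dOp_X_of_rootDiff hγ', MvPolynomial.coeff_monomial] at ht
        split_ifs at ht with htu
        · obtain ⟨w, rfl⟩ : ∃ w, u = Finsupp.single β' 1 + w := by
            refine exists_add_of_le (Finsupp.single_le_iff.2 ?_)
            rw [Finsupp.mem_support_iff] at hβ'
            omega
          rw [add_tsub_cancel_left] at htu
          have hu' : Finsupp.single β' 1 + w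
              = Multiset.toFinsupp (β' ::ₘ Finsupp.toMultiset w) := by
            rw [← Multiset.singleton_add, map_add, Multiset.toFinsupp_singleton,
              Finsupp.toMultiset_toFinsupp]
          have ht' : t = γ' ::ₘ Finsupp.toMultiset w := by
            apply Multiset.toFinsupp.injective
            rw [← htu, ← Multiset.singleton_add, map_add, Multiset.toFinsupp_singleton,
              Finsupp.toMultiset_toFinsupp, add_comm]
          rw [MvPolynomial.mem_support_iff, hu'] at hu
          obtain ⟨hPu, hRu⟩ := hP _ hu
          subst ht'
          refine ⟨fun hRt => hPQ _ _ _ hPu (hRu _ (Multiset.mem_cons_self _ _)) hγ'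
            (hRt _ (Multiset.mem_cons_self _ _)), fun x hx => ?_⟩
          rcases Multiset.mem_cons.1 hx with rfl | hx
          · exact hγ'.1
          · exact hRroot _ (hRu _ (Multiset.mem_cons_of_mem hx))
        · simp at ht
      · rw [dOp_X_of_not hγ', mul_zero, MvPolynomial.coeff_zero] at ht
        simp at ht
  refine (main.of_filter hR ?_).mono fun t hR h => h hR
  intro x hx
  rcases Multiset.mem_cons.1 hx with rfl | hx
  · exact hγ
  · exact hRs _ (Multiset.mem_cons_of_mem hx)

lemma Dominates.replicate {σ : Type*} [DecidableEq σ] {I : Ideal (MvPolynomial σ ℂ)}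
    {R : σ → Prop} {x : σ} {k : ℕ} (h : MvPolynomial.X x ^ k ∈ I) (hx : R x) :
    Dominates I R (fun t => t = Multiset.replicate k x) (Multiset.replicate k x) := by
  classical
  have hrep : Multiset.toFinsupp (Multiset.replicate k x) = Finsupp.single x k := by
    ext y
    rw [Multiset.toFinsupp_apply, Multiset.count_replicate, Finsupp.single_apply]
  refine ⟨_, h, fun t => ?_, ?_, fun t ht => ?_⟩
  · rw [MvPolynomial.coeff_X_pow]
    split_ifs
    · exact zero_le_one
    · exact le_rfl
  · rw [hrep, MvPolynomial.coeff_X_pow, if_pos rfl]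
    exact one_ne_zero
  · rw [MvPolynomial.coeff_X_pow] at ht
    split_ifs at ht with h1
    · rw [← hrep] at h1
      obtain rfl := Multiset.toFinsupp.injective h1
      exact ⟨rfl, fun y hy => by rwa [Multiset.eq_of_mem_replicate hy]⟩
    · exact absurd rfl ht

/-- A dominated monomial that is maximal among the occurring monomials can be straightened. -/
lemma Dominates.exists_straightening {σ : Type*} [DecidableEq σ] {I : Ideal (MvPolynomial σ ℂ)}
    {R : σ → Prop} {P : Multiset σ → Prop} {s : σ →₀ ℕ} {lt : (σ →₀ ℕ) → (σ →₀ ℕ) → Prop}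
    (h : Dominates I R P (Finsupp.toMultiset s))
    (hP : ∀ t, P t → t = Finsupp.toMultiset s ∨ lt (Multiset.toFinsupp t) s) :
    ∃ g : MvPolynomial σ ℂ, (∀ t ∈ g.support, lt t s) ∧ MvPolynomial.monomial s 1 + g ∈ I := by
  obtain ⟨f, hf, -, hs, hPf⟩ := h
  rw [Finsupp.toMultiset_toFinsupp] at hs
  refine ⟨MvPolynomial.C (f.coeff s)⁻¹ * f - MvPolynomial.monomial s 1, fun t ht => ?_, ?_⟩
  · rw [MvPolynomial.mem_support_iff, MvPolynomial.coeff_sub, MvPolynomial.coeff_C_mul,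
      MvPolynomial.coeff_monomial] at ht
    by_cases hts : s = t
    · subst hts
      rw [if_pos rfl, inv_mul_cancel₀ hs, sub_self] at ht
      exact absurd rfl ht
    · rw [if_neg hts, sub_zero] at ht
      have h0 : f.coeff t ≠ 0 := right_ne_zero_of_mul ht
      rw [← Finsupp.toMultiset_toFinsupp t] at h0 ⊢
      rcases hP _ (hPf _ h0).1 with h1 | h1
      · have h2 := congrArg Multiset.toFinsupp h1
        rw [Finsupp.toMultiset_toFinsupp, Finsupp.toMultiset_toFinsupp] at h2
        exact absurd h2.symm hts
      · exact h1
  · rw [add_sub_cancel]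
    exact I.mul_mem_left _ hf

end Dominates

lemma le_of_eq_on_larger {N p w : ℕ} {τ σ : ℕ → ℕ → ℕ} (hpw : p < w) (hw : w < N)
    (heq : ∀ a b, w < max a b ∨ max a b = w ∧ p < min a b → τ a b = σ a b)
    (hcol : ∑ a ∈ Finset.range N, σ a w ≤ ∑ a ∈ Finset.range N, τ a w)
    (hrow : ∀ a < p, ∑ b ∈ Finset.range N, τ a b ≤ ∑ b ∈ Finset.range N, σ a b)
    (hchain : 0 < σ p w → ∀ a < p, ∀ b < w, σ a b = 0) : σ p w ≤ τ p w := by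
  by_contra! hlt
  have hz := hchain (by omega)
  have hle : ∀ a < p, τ a w ≤ σ a w := by
    intro a ha
    by_contra! hlt'
    refine absurd (hrow a ha) (not_le.2 (Finset.sum_lt_sum (fun b _ => ?_)
      ⟨w, Finset.mem_range.2 hw, hlt'⟩))
    rcases lt_trichotomy b w with hb | rfl | hb
    · rw [hz a ha b hb]; exact Nat.zero_le _
    · exact hlt'.le
    · exact (heq a b (by omega)).ge
  refine absurd hcol (not_le.2 (Finset.sum_lt_sum (fun a _ => ?_)
    ⟨p, Finset.mem_range.2 (hpw.trans hw), hlt⟩))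
  rcases lt_trichotomy a p with ha | rfl | ha
  · exact hle a ha
  · exact hlt.le
  · exact (heq a w (by omega)).le

lemma Multiset.count_map_snd_eq_sum {N : ℕ} (T : Multiset (ℕ × ℕ)) (hT : ∀ z ∈ T, z.1 < N)
    (w : ℕ) : (T.map Prod.snd).count w = ∑ a ∈ Finset.range N, T.count (a, w) := by
  induction T using Multiset.induction with
  | empty => simp
  | cons z T ih =>
    have hz := hT z (Multiset.mem_cons_self _ _)
    rw [Multiset.map_cons, Multiset.count_cons,
      ih fun z hz => hT z (Multiset.mem_cons_of_mem hz)]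
    simp only [Multiset.count_cons, Finset.sum_add_distrib]
    congr 1
    obtain ⟨x, y⟩ := z
    simp only [Prod.mk.injEq]
    by_cases h : w = y
    · simp [h, hz]
    · simp [h]

lemma Multiset.count_map_fst_eq_sum {N : ℕ} (T : Multiset (ℕ × ℕ)) (hT : ∀ z ∈ T, z.2 < N)
    (a : ℕ) : (T.map Prod.fst).count a = ∑ b ∈ Finset.range N, T.count (a, b) := by
  induction T using Multiset.induction with
  | empty => simp
  | cons z T ih =>
    have hz := hT z (Multiset.mem_cons_self _ _)
    rw [Multiset.map_cons, Multiset.count_cons,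
      ih fun z hz => hT z (Multiset.mem_cons_of_mem hz)]
    simp only [Multiset.count_cons, Finset.sum_add_distrib]
    congr 1
    obtain ⟨x, y⟩ := z
    simp only [Prod.mk.injEq]
    by_cases h : a = x
    · simp [h, hz]
    · simp [h]

/-- `ColLarger B B₀`: the multisets differ, and at the largest letter where their multiplicities
differ `B` has the larger one. -/
def ColLarger (B B₀ : Multiset ℕ) : Prop :=
  ∃ w, B₀.count w < B.count w ∧ ∀ v, w < v → B.count v = B₀.count v

/-- Multisets of pairs `(a, b)` stand for bijections between the multiset of first and the multiset
of second entries. If the increasing and the decreasing pairs of `T₀` both form nested chains, then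
any other such multiset `T` with the same margins exceeds `T₀` at the first place (largest maximum,
then largest minimum) where they differ. -/
lemma eq_or_exists_lt_of_margins {N : ℕ} {T T₀ : Multiset (ℕ × ℕ)}
    (hT : ∀ z ∈ T, z.1 < N ∧ z.2 < N ∧ z.1 ≠ z.2) (hT₀ : ∀ z ∈ T₀, z.1 < N ∧ z.2 < N ∧ z.1 ≠ z.2)
    (hfst : T.map Prod.fst = T₀.map Prod.fst)
    (hsnd : T.map Prod.snd = T₀.map Prod.snd ∨
      (∀ z ∈ T₀, z.1 < z.2) ∧ ColLarger (T.map Prod.snd) (T₀.map Prod.snd))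
    (hinc : ∀ z ∈ T₀, ∀ z' ∈ T₀, z.1 < z.2 → z'.1 < z.1 → z.2 ≤ z'.2)
    (hdec : ∀ z ∈ T₀, ∀ z' ∈ T₀, z.2 < z.1 → z'.2 < z.2 → z.1 ≤ z'.1) :
    T = T₀ ∨ ∃ p w, p < w ∧ w < N ∧
      T₀.count (p, w) + T₀.count (w, p) < T.count (p, w) + T.count (w, p) ∧
      ∀ a b, w < max a b ∨ max a b = w ∧ p < min a b → T.count (a, b) = T₀.count (a, b) := by
  classical
  rw [or_iff_not_imp_left]
  intro hne
  set F := ((Finset.range N) ×ˢ (Finset.range N)).filter fun z => T.count z ≠ T₀.count z with hF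
  have hout : ∀ z : ℕ × ℕ, z ∉ F → T.count z = T₀.count z := by
    intro z hz
    by_contra hcount
    refine hz (Finset.mem_filter.2 ⟨?_, hcount⟩)
    have : z ∈ T ∨ z ∈ T₀ := by
      by_contra! hmem
      rw [Multiset.count_eq_zero_of_notMem hmem.1, Multiset.count_eq_zero_of_notMem hmem.2]
        at hcount
      exact hcount rfl
    rw [Finset.mem_product, Finset.mem_range, Finset.mem_range]
    rcases this with h | h
    · exact ⟨(hT z h).1, (hT z h).2.1⟩
    · exact ⟨(hT₀ z h).1, (hT₀ z h).2.1⟩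
  have hFne : F.Nonempty := by
    by_contra hemp
    rw [Finset.not_nonempty_iff_eq_empty] at hemp
    exact hne (Multiset.ext.2 fun z => hout z (by rw [hemp]; exact Finset.notMem_empty z))
  obtain ⟨⟨x, y⟩, hxy, hmax⟩ := Finset.exists_max_image F
    (fun z => max z.1 z.2 * N + min z.1 z.2) hFne
  have hxy' := hxy
  rw [hF, Finset.mem_filter, Finset.mem_product, Finset.mem_range, Finset.mem_range] at hxy'
  obtain ⟨⟨hx, hy⟩, hcne⟩ := hxy'
  dsimp only at hx hy hmax
  have hdiagT : ∀ a, T.count (a, a) = 0 := fun a =>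
    Multiset.count_eq_zero_of_notMem fun h => (hT _ h).2.2 rfl
  have hdiagT₀ : ∀ a, T₀.count (a, a) = 0 := fun a =>
    Multiset.count_eq_zero_of_notMem fun h => (hT₀ _ h).2.2 rfl
  have hxyne : x ≠ y := by
    rintro rfl
    exact hcne (by rw [hdiagT, hdiagT₀])
  obtain ⟨p, hp⟩ : ∃ p, p = min x y := ⟨_, rfl⟩
  obtain ⟨w, hw⟩ : ∃ w, w = max x y := ⟨_, rfl⟩
  have hpw : p < w := by omega
  have hwN : w < N := by omega
  have heq : ∀ a b, w < max a b ∨ max a b = w ∧ p < min a b →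
      T.count (a, b) = T₀.count (a, b) := by
    intro a b hab
    refine hout _ fun hmem => ?_
    have := hmax _ hmem
    dsimp only at this
    rw [← hp, ← hw] at this
    rcases hab with hab | ⟨hab, hab'⟩
    · have : (w + 1) * N ≤ max a b * N := Nat.mul_le_mul_right _ hab
      have : (w + 1) * N = w * N + N := by ring
      omega
    · rw [hab] at this
      omega
  have heq' : ∀ a b, w < max a b ∨ max a b = w ∧ p < min a b →
      T.count (b, a) = T₀.count (b, a) := fun a b hab =>
    heq b a (by rwa [max_comm, min_comm b a])
  have hfst' : ∀ a, ∑ b ∈ Finset.range N, T.count (a, b)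
      = ∑ b ∈ Finset.range N, T₀.count (a, b) := by
    intro a
    rw [← Multiset.count_map_fst_eq_sum T (fun z hz => (hT z hz).2.1),
      ← Multiset.count_map_fst_eq_sum T₀ (fun z hz => (hT₀ z hz).2.1), hfst]
  have hinc' : T₀.count (p, w) ≤ T.count (p, w) := by
    refine le_of_eq_on_larger (τ := fun a b => T.count (a, b)) (σ := fun a b => T₀.count (a, b))
      hpw hwN heq ?_ (fun a _ => (hfst' a).le) ?_
    · rw [← Multiset.count_map_snd_eq_sum T (fun z hz => (hT z hz).1),
        ← Multiset.count_map_snd_eq_sum T₀ (fun z hz => (hT₀ z hz).1)]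
      rcases hsnd with hsnd | ⟨-, w₀, hw₀, hw₀'⟩
      · rw [hsnd]
      · rcases lt_trichotomy w w₀ with hlt | rfl | hlt
        · exfalso
          rw [Multiset.count_map_snd_eq_sum T (fun z hz => (hT z hz).1),
            Multiset.count_map_snd_eq_sum T₀ (fun z hz => (hT₀ z hz).1)] at hw₀
          exact hw₀.ne (Finset.sum_congr rfl fun a _ => (heq a w₀ (by omega)).symm)
        · exact hw₀.le
        · exact (hw₀' w hlt).ge
    · intro hpos a ha b hb
      refine Multiset.count_eq_zero_of_notMem fun hab => ?_
      have := hinc _ (Multiset.count_pos.1 hpos) _ hab hpw ha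
      dsimp only at this
      omega
  have hdec' : T₀.count (w, p) ≤ T.count (w, p) := by
    rcases hsnd with hsnd | ⟨hlt, -⟩
    · refine le_of_eq_on_larger (τ := fun a b => T.count (b, a))
        (σ := fun a b => T₀.count (b, a)) hpw hwN heq' (hfst' w).ge (fun a _ => ?_) ?_
      · rw [← Multiset.count_map_snd_eq_sum T (fun z hz => (hT z hz).1),
          ← Multiset.count_map_snd_eq_sum T₀ (fun z hz => (hT₀ z hz).1), hsnd]
      · intro hpos a ha b hb
        refine Multiset.count_eq_zero_of_notMem fun hab => ?_
        have := hdec _ (Multiset.count_pos.1 hpos) _ hab hpw ha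
        dsimp only at this
        omega
    · rw [Multiset.count_eq_zero_of_notMem fun h => absurd (hlt _ h) (by dsimp only; omega)]
      exact Nat.zero_le _
  refine ⟨p, w, hpw, hwN, ?_, heq⟩
  rcases le_total x y with h | h
  · rw [min_eq_left h] at hp
    rw [max_eq_right h] at hw
    subst hp hw
    omega
  · rw [min_eq_right h] at hp
    rw [max_eq_left h] at hw
    subst hp hw
    omega

/-- The root of `B_n` attached to the pair of letters `x, y`: for `x < y` it is
`α_{x, 2n + 1 - y}`. -/
def pairRoot (n : ℕ) (z : ℕ × ℕ) : ℕ × ℕ := (min z.1 z.2, 2 * n + 1 - max z.1 z.2)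

lemma pairRoot_of_le {n x y : ℕ} (h : x ≤ y) : pairRoot n (x, y) = (x, 2 * n + 1 - y) := by
  simp only [pairRoot, min_eq_left h, max_eq_right h]

lemma count_map_pairRoot {n p w : ℕ} {T : Multiset (ℕ × ℕ)}
    (hT : ∀ z ∈ T, z.1 < 2 * n + 1 ∧ z.2 < 2 * n + 1 ∧ z.1 ≠ z.2) (hpw : p < w)
    (hw : w < 2 * n + 1) :
    (T.map (pairRoot n)).count (p, 2 * n + 1 - w) = T.count (p, w) + T.count (w, p) := by
  induction T using Multiset.induction with
  | empty => simp
  | cons z T ih =>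
    obtain ⟨h1, h2, h3⟩ := hT z (Multiset.mem_cons_self _ _)
    rw [Multiset.map_cons, Multiset.count_cons, Multiset.count_cons, Multiset.count_cons,
      ih fun z hz => hT z (Multiset.mem_cons_of_mem hz)]
    obtain ⟨x, y⟩ := z
    dsimp only at h1 h2 h3
    simp only [pairRoot, Prod.mk.injEq]
    split_ifs <;> omega

lemma expLT_of_margins {n : ℕ} {T T₀ : Multiset (ℕ × ℕ)}
    (hT : ∀ z ∈ T, z.1 < 2 * n + 1 ∧ z.2 < 2 * n + 1 ∧ z.1 ≠ z.2)
    (hT₀ : ∀ z ∈ T₀, z.1 < 2 * n + 1 ∧ z.2 < 2 * n + 1 ∧ z.1 ≠ z.2)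
    (hfst : T.map Prod.fst = T₀.map Prod.fst)
    (hsnd : T.map Prod.snd = T₀.map Prod.snd ∨
      (∀ z ∈ T₀, z.1 < z.2) ∧ ColLarger (T.map Prod.snd) (T₀.map Prod.snd))
    (hinc : ∀ z ∈ T₀, ∀ z' ∈ T₀, z.1 < z.2 → z'.1 < z.1 → z.2 ≤ z'.2)
    (hdec : ∀ z ∈ T₀, ∀ z' ∈ T₀, z.2 < z.1 → z'.2 < z.2 → z.1 ≤ z'.1) :
    T = T₀ ∨ expLT (Multiset.toFinsupp (T.map (pairRoot n)))
      (Multiset.toFinsupp (T₀.map (pairRoot n))) := by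
  refine (eq_or_exists_lt_of_margins hT hT₀ hfst hsnd hinc hdec).imp_right ?_
  rintro ⟨p, w, hpw, hw, hlt, heq⟩
  right
  constructor
  · refine (Multiset.toFinsupp_sum_eq _).trans (Eq.trans ?_ (Multiset.toFinsupp_sum_eq _).symm)
    rw [Multiset.card_map, Multiset.card_map, ← Multiset.card_map Prod.fst T, hfst, Multiset.card_map]
  · refine ⟨(p, 2 * n + 1 - w), ?_, ?_⟩
    · rw [Multiset.toFinsupp_apply, Multiset.toFinsupp_apply, count_map_pairRoot hT hpw hw,
        count_map_pairRoot hT₀ hpw hw]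
      exact hlt
    · rintro γ hγ
      rw [Multiset.toFinsupp_apply, Multiset.toFinsupp_apply]
      have hform : γ ∈ T.map (pairRoot n) ∨ γ ∈ T₀.map (pairRoot n) →
          ∃ a b, a < b ∧ b < 2 * n + 1 ∧ γ = (a, 2 * n + 1 - b) := by
        have key : ∀ z : ℕ × ℕ, z.1 < 2 * n + 1 ∧ z.2 < 2 * n + 1 ∧ z.1 ≠ z.2 →
            ∃ a b, a < b ∧ b < 2 * n + 1 ∧ pairRoot n z = (a, 2 * n + 1 - b) := fun z hz =>
          ⟨min z.1 z.2, max z.1 z.2, by omega, by omega, rfl⟩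
        rintro (h | h)
        · obtain ⟨z, hz, rfl⟩ := Multiset.mem_map.1 h
          exact key z (hT z hz)
        · obtain ⟨z, hz, rfl⟩ := Multiset.mem_map.1 h
          exact key z (hT₀ z hz)
      by_cases hmem : γ ∈ T.map (pairRoot n) ∨ γ ∈ T₀.map (pairRoot n)
      · obtain ⟨a, b, hab, hb, rfl⟩ := hform hmem
        simp only [rootLT] at hγ
        rw [count_map_pairRoot hT hab hb, count_map_pairRoot hT₀ hab hb, heq a b (by omega),
          heq b a (by omega)]
      · rw [not_or] at hmem
        rw [Multiset.count_eq_zero_of_notMem hmem.1, Multiset.count_eq_zero_of_notMem hmem.2]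

lemma inR.isBRoot {n i : ℕ} (hin : i ≤ n) {x : ℕ × ℕ} (h : inR n i x) : isBRoot n x :=
  ⟨h.1, h.2.1.trans hin, h.2.1.trans h.2.2.1, h.2.2.2⟩

lemma X_mem_Ilam {n i : ℕ} (m : ℕ) {β : ℕ × ℕ} (h : isBRoot n β) (h' : ¬ inR n i β) :
    MvPolynomial.X β ∈ Ilam n i m :=
  (Submodule.mem_sInf).2 fun _ hI => hI.2.2.1 β h h'

lemma dOp_mem_Ilam {n i m : ℕ} {ν : ℕ × ℕ} (hν : isBRoot n ν) {f : MvPolynomial (ℕ × ℕ) ℂ}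
    (hf : f ∈ Ilam n i m) : dOp n ν f ∈ Ilam n i m :=
  (Submodule.mem_sInf).2 fun I hI => hI.2.2.2 ν hν f ((Submodule.mem_sInf).1 hf I hI)

lemma X_highest_pow_mem_Ilam {n i m k : ℕ} (hk : m * cB n i < k) :
    MvPolynomial.X (1, 2 * n - 1) ^ k ∈ Ilam n i m := by
  have h : MvPolynomial.X (1, 2 * n - 1) ^ (cB n i * m + 1) ∈ Ilam n i m :=
    (Submodule.mem_sInf).2 fun _ hI => hI.1
  exact Ideal.pow_mem_of_pow_mem _ h (by rw [mul_comm]; exact hk)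

lemma X_pow_mem_Ilam {n i m k : ℕ} (hk : m < k) :
    MvPolynomial.X (1, 2 * n - i) ^ k ∈ Ilam n i m := by
  have h : MvPolynomial.X (1, 2 * n - i) ^ (m + 1) ∈ Ilam n i m :=
    (Submodule.mem_sInf).2 fun _ hI => hI.2.1
  exact Ideal.pow_mem_of_pow_mem _ h hk

lemma rootDiff_pairRoot {n i a b : ℕ} (hin : i ≤ n) (ha : 2 ≤ a) (ha' : a ≤ 2 * n)
    (hb : 2 ≤ b) (hb' : b ≤ 2 * n) (hab : a ≠ b) (h : inR n i (pairRoot n (a, b))) :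
    RootDiff n (1, a - 1) (pairRoot n (1, b)) (pairRoot n (a, b)) := by
  refine ⟨h.isBRoot hin, fun j => ?_⟩
  have h' := h.isBRoot hin
  rw [pairRoot_of_le (by omega : 1 ≤ b)]
  unfold pairRoot at h' ⊢
  have hmin := h'.2.1
  dsimp only at h' hmin ⊢
  rw [rootVec_eq h', rootVec_eq ⟨by omega, by dsimp only; omega, by dsimp only; omega,
    by dsimp only; omega⟩, rootVec_eq ⟨by omega, by dsimp only; omega, by dsimp only; omega,
    by dsimp only; omega⟩]
  rcases lt_or_gt_of_ne hab with hlt | hlt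
  · rw [min_eq_left hlt.le, max_eq_right hlt.le]
    split_ifs <;> omega
  · rw [min_eq_right hlt.le, max_eq_left hlt.le]
    split_ifs <;> omega

lemma RootDiff.pairRoot_cases {n i a x y : ℕ} {γ : ℕ × ℕ} (hin : i ≤ n) (ha : 2 ≤ a)
    (ha' : a ≤ 2 * n + 1 - i) (hx' : x ≤ 2 * n + 1 - i) (hy : 2 ≤ y)
    (hy' : y ≤ 2 * n + 1 - i) (hβ : inR n i (pairRoot n (x, y))) (hγ : inR n i γ)
    (h : RootDiff n (1, a - 1) (pairRoot n (x, y)) γ) :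
    x = 1 ∧ a ≠ y ∧ γ = pairRoot n (a, y) := by
  have hi : 1 ≤ i := hβ.1.trans hβ.2.1
  have key : ∀ U, OddFun n U → U γ.1 + U (2 * n + 1 - γ.2) + U 1 = U x + U y + U a := by
    intro U hU
    have h1 := h.oddFun_eq ⟨le_rfl, by dsimp only; omega, by dsimp only; omega,
      by dsimp only; omega⟩ (hβ.isBRoot hin) hU
    have h2 := hU a (by omega)
    dsimp only at h1
    rw [show 2 * n + 1 - (a - 1) = 2 * n + 2 - a by omega, h2] at h1
    have h3 : U (pairRoot n (x, y)).1 + U (2 * n + 1 - (pairRoot n (x, y)).2) = U x + U y := by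
      unfold pairRoot
      dsimp only
      rw [show 2 * n + 1 - (2 * n + 1 - max x y) = max x y by omega]
      rcases le_total x y with hxy | hxy
      · rw [min_eq_left hxy, max_eq_right hxy]
      · rw [min_eq_right hxy, max_eq_left hxy, add_comm]
    rw [h3] at h1
    linarith
  obtain ⟨p, q⟩ := γ
  obtain ⟨g1, g2, g3, g4⟩ := hγ
  dsimp only at g1 g2 g3 g4 key
  have k1 := key _ (oddFun_linear n)
  have k2 := key _ (oddFun_oddDelta 1 (by omega))
  have k3 := key _ (oddFun_oddDelta p (by omega))
  rw [oddDelta_eq_zero (by omega : 2 * n + 1 - q ≠ 1) (by omega), oddDelta_self (by omega),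
    oddDelta_eq_zero (by omega : y ≠ 1) (by omega),
    oddDelta_eq_zero (by omega : a ≠ 1) (by omega)] at k2
  have hp := oddDelta_nonneg (by omega : p + 1 ≠ 2 * n + 2)
  have hx1 : x = 1 := by
    by_contra hne
    have := oddDelta_nonpos (n := n) hne
    omega
  subst hx1
  have hp1 : p ≠ 1 := by
    rintro rfl
    rw [oddDelta_self (by omega)] at k2
    omega
  rw [oddDelta_self (by omega), oddDelta_eq_zero (by omega : 2 * n + 1 - q ≠ p) (by omega),
    oddDelta_eq_zero hp1.symm (by omega)] at k3
  have hpa : p = a ∨ p = y := by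
    by_contra! hne
    have := oddDelta_nonpos (n := n) hne.1.symm
    have := oddDelta_nonpos (n := n) hne.2.symm
    omega
  refine ⟨rfl, by omega, ?_⟩
  simp only [pairRoot, Prod.mk.injEq]
  omega

/-- The two effects of subtracting the root `α_{c, w - 1}` from a root `α_{1, 2n + 1 - y}`: the
letter `c` becomes `w`, and the letter opposite to `w` becomes the one opposite to `c`. -/
def ColMove (n c w y y' : ℕ) : Prop :=
  y = c ∧ y' = w ∨ y = 2 * n + 2 - w ∧ y' = 2 * n + 2 - c

lemma ColMove.rootDiff {n c w y y' : ℕ} (hc : 2 ≤ c) (hcn : c ≤ n) (hcw : c < w)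
    (hw : c + w ≤ 2 * n + 1) (h : ColMove n c w y y') :
    RootDiff n (c, w - 1) (pairRoot n (1, y)) (pairRoot n (1, y')) := by
  have hy : 2 ≤ y ∧ y ≤ 2 * n ∧ 2 ≤ y' ∧ y' ≤ 2 * n := by
    rcases h with ⟨rfl, rfl⟩ | ⟨rfl, rfl⟩ <;> omega
  rw [pairRoot_of_le (by omega), pairRoot_of_le (by omega)]
  have hroot : isBRoot n (1, 2 * n + 1 - y') :=
    ⟨le_rfl, by dsimp only; omega, by dsimp only; omega, by dsimp only; omega⟩
  refine ⟨hroot, fun j => ?_⟩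
  rw [rootVec_eq hroot, rootVec_eq ⟨le_rfl, by dsimp only; omega, by dsimp only; omega,
    by dsimp only; omega⟩, rootVec_eq ⟨by dsimp only; omega, by dsimp only; omega,
    by dsimp only; omega, by dsimp only; omega⟩]
  rcases h with ⟨rfl, rfl⟩ | ⟨rfl, rfl⟩ <;> split_ifs <;> omega

lemma RootDiff.colMove {n i c w y : ℕ} {γ : ℕ × ℕ} (hi : 1 ≤ i) (hin : i ≤ n) (hc : 2 ≤ c)
    (hcn : c ≤ n) (hcw : c < w) (hw : c + w ≤ 2 * n + 1) (hy : 2 ≤ y)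
    (hy' : y ≤ 2 * n + 1 - i) (hγ : inR n i γ)
    (h : RootDiff n (c, w - 1) (pairRoot n (1, y)) γ) :
    ∃ y', 2 ≤ y' ∧ y' ≤ 2 * n + 1 - i ∧ ColMove n c w y y' ∧ γ = pairRoot n (1, y') := by
  rw [pairRoot_of_le (by omega)] at h
  have key : ∀ U, OddFun n U → U γ.1 + U (2 * n + 1 - γ.2) + U c = U 1 + U y + U w := by
    intro U hU
    have h1 := h.oddFun_eq ⟨by dsimp only; omega, by dsimp only; omega, by dsimp only; omega,
      by dsimp only; omega⟩ ⟨le_rfl, by dsimp only; omega, by dsimp only; omega,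
      by dsimp only; omega⟩ hU
    have h2 := hU w (by omega)
    dsimp only at h1
    rw [show 2 * n + 1 - (w - 1) = 2 * n + 2 - w by omega, h2,
      show 2 * n + 1 - (2 * n + 1 - y) = y by omega] at h1
    linarith
  obtain ⟨p, q⟩ := γ
  obtain ⟨g1, g2, g3, g4⟩ := hγ
  dsimp only at g1 g2 g3 g4 key
  have k1 := key _ (oddFun_linear n)
  have k2 := key _ (oddFun_oddDelta 1 (by omega))
  have k3 := key _ (oddFun_oddDelta c hcn)
  rw [oddDelta_eq_zero (by omega : 2 * n + 1 - q ≠ 1) (by omega), oddDelta_self (by omega),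
    oddDelta_eq_zero (by omega : y ≠ 1) (by omega),
    oddDelta_eq_zero (by omega : c ≠ 1) (by omega),
    oddDelta_eq_zero (by omega : w ≠ 1) (by omega)] at k2
  have hp1 : p = 1 := by
    by_contra hne
    have := oddDelta_nonpos (n := n) hne
    omega
  subst hp1
  rw [oddDelta_eq_zero (by omega : 1 ≠ c) (by omega), oddDelta_self hcn,
    oddDelta_eq_zero (by omega : w ≠ c) (by omega)] at k3
  have hcases : y = c ∨ 2 * n + 1 - q + c = 2 * n + 2 := by
    by_contra! hne
    have := oddDelta_nonpos (n := n) hne.1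
    have := oddDelta_nonneg hne.2
    omega
  refine ⟨2 * n + 1 - q, by omega, by omega, ?_, ?_⟩
  · unfold ColMove
    omega
  · rw [pairRoot_of_le (by omega), Prod.mk.injEq]
    omega

lemma Multiset.map_induction {α β : Type*} {X : Multiset β → Prop} {f g : α → β}
    {s : Multiset α} (h : ∀ a ∈ s, ∀ B, X (f a ::ₘ B) → X (g a ::ₘ B)) (hf : X (s.map f)) :
    X (s.map g) := by
  suffices H : ∀ D, X (s.map f + D) → X (s.map g + D) by
    simpa using H 0 (by simpa using hf)
  clear hf
  induction s using Multiset.induction with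
  | empty => simp
  | cons a s ih =>
    intro D hD
    rw [Multiset.map_cons, Multiset.cons_add] at hD ⊢
    have h1 := h a (Multiset.mem_cons_self _ _) _ hD
    rw [← Multiset.add_cons] at h1 ⊢
    exact ih (fun a ha => h a (Multiset.mem_cons_of_mem ha)) _ h1

/-- `I_{m·ω_i}` contains a polynomial in the variables `α_{1, 2n + 1 - y}` in which the monomial
given by the letters `B₀` occurs, and whose other monomials are given by equally many letters
`B` related to `B₀` by `Q`. -/
def ColDominates (n i m : ℕ) (Q : Multiset ℕ → Multiset ℕ → Prop) (B₀ : Multiset ℕ) : Prop :=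
  Dominates (Ilam n i m) (inR n i)
    (fun t => ∃ B : Multiset ℕ, t = B.map (fun y => pairRoot n (1, y)) ∧
      (∀ y ∈ B, 2 ≤ y ∧ y ≤ 2 * n + 1 - i) ∧ B.card = B₀.card ∧ Q B B₀)
    (B₀.map fun y => pairRoot n (1, y))

lemma ColDominates.mono {n i m : ℕ} {Q Q' : Multiset ℕ → Multiset ℕ → Prop} {B₀ : Multiset ℕ}
    (h : ColDominates n i m Q B₀)
    (hQ : ∀ B, (∀ y ∈ B, 2 ≤ y ∧ y ≤ 2 * n + 1 - i) → B.card = B₀.card → Q B B₀ → Q' B B₀) :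
    ColDominates n i m Q' B₀ :=
  Dominates.mono h fun _ _ ⟨B, h1, h2, h3, h4⟩ => ⟨B, h1, h2, h3, hQ B h2 h3 h4⟩

lemma inR_pairRoot_one {n i y : ℕ} (hi : 1 ≤ i) (hin : i ≤ n) (hy : 2 ≤ y)
    (hy' : y ≤ 2 * n + 1 - i) : inR n i (pairRoot n (1, y)) := by
  rw [pairRoot_of_le (by omega)]
  exact ⟨le_rfl, hi, by dsimp only; omega, by dsimp only; omega⟩

lemma ColDominates.replicate {n i m k c : ℕ} {Q : Multiset ℕ → Multiset ℕ → Prop} (hi : 1 ≤ i)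
    (hin : i ≤ n) (hc : 2 ≤ c) (hc' : c ≤ 2 * n + 1 - i)
    (h : MvPolynomial.X (1, 2 * n + 1 - c) ^ k ∈ Ilam n i m) (hQ : ∀ B, Q B B) :
    ColDominates n i m Q (Multiset.replicate k c) := by
  unfold ColDominates
  rw [← pairRoot_of_le (by omega : 1 ≤ c)] at h
  rw [Multiset.map_replicate]
  refine (Dominates.replicate h (inR_pairRoot_one hi hin hc hc')).mono ?_
  rintro t - rfl
  refine ⟨Multiset.replicate k c, by rw [Multiset.map_replicate], fun y hy => ?_, rfl, hQ _⟩
  rw [Multiset.eq_of_mem_replicate hy]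
  exact ⟨hc, hc'⟩

lemma ColDominates.move {n i m c w y₀ y₀' : ℕ} {Q : Multiset ℕ → Multiset ℕ → Prop}
    {B₀ : Multiset ℕ} (hi : 1 ≤ i) (hin : i ≤ n) (hc : 2 ≤ c) (hcn : c ≤ n) (hcw : c < w)
    (hw : c + w ≤ 2 * n + 1) (h : ColDominates n i m Q (y₀ ::ₘ B₀))
    (hmove : ColMove n c w y₀ y₀') (hy₀' : y₀' ≤ 2 * n + 1 - i)
    (hQ : ∀ B y y', y' ≤ 2 * n + 1 - i → ColMove n c w y y' → Q (y ::ₘ B) (y₀ ::ₘ B₀) →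
      Q (y' ::ₘ B) (y₀' ::ₘ B₀)) :
    ColDominates n i m Q (y₀' ::ₘ B₀) := by
  unfold ColDominates at h ⊢
  rw [Multiset.map_cons] at h ⊢
  have hroot : isBRoot n (c, w - 1) :=
    ⟨by dsimp only; omega, hcn, by dsimp only; omega, by dsimp only; omega⟩
  refine h.dOp (fun f hf => dOp_mem_Ilam hroot hf) (hmove.rootDiff hc hcn hcw hw)
    (fun x hx hx' => X_mem_Ilam m hx hx') (fun x hx => hx.isBRoot hin)
    (inR_pairRoot_one hi hin ?_ hy₀') ?_
  · unfold ColMove at hmove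
    omega
  · rintro t β γ ⟨B, ht, hB, hcard, hQB⟩ - hdiff hγ
    have hmem : β ∈ B.map fun y => pairRoot n (1, y) := ht ▸ Multiset.mem_cons_self _ _
    obtain ⟨y, hy, rfl⟩ := Multiset.mem_map.1 hmem
    obtain ⟨B, rfl⟩ := Multiset.exists_cons_of_mem hy
    rw [Multiset.map_cons, Multiset.cons_inj_right] at ht
    subst ht
    obtain ⟨hy2, hy3⟩ := hB y (Multiset.mem_cons_self _ _)
    obtain ⟨y', h1, h2, h3, rfl⟩ := hdiff.colMove hi hin hc hcn hcw hw hy2 hy3 hγ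
    refine ⟨y' ::ₘ B, by rw [Multiset.map_cons], fun x hx => ?_, by simpa using hcard,
      hQ B y y' h2 h3 hQB⟩
    rcases Multiset.mem_cons.1 hx with rfl | hx
    · exact ⟨h1, h2⟩
    · exact hB x (Multiset.mem_cons_of_mem hx)

/-- `I_{m·ω_i}` contains a polynomial in which the monomial given by the pairs `T₀` occurs, and
whose other monomials are given by multisets of pairs with the same first entries as `T₀` and with
second entries satisfying `Q`. -/
def PairDominates (n i m : ℕ) (Q : Multiset ℕ → Prop) (T₀ : Multiset (ℕ × ℕ)) : Prop :=
  Dominates (Ilam n i m) (inR n i)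
    (fun t => ∃ T : Multiset (ℕ × ℕ), t = T.map (pairRoot n) ∧
      (∀ z ∈ T, z.1 ≤ 2 * n + 1 - i ∧ 2 ≤ z.2 ∧ z.2 ≤ 2 * n + 1 - i ∧ z.1 ≠ z.2) ∧
      T.map Prod.fst = T₀.map Prod.fst ∧ Q (T.map Prod.snd))
    (T₀.map (pairRoot n))

lemma ColDominates.pairDominates {n i m : ℕ} {Q : Multiset ℕ → Multiset ℕ → Prop}
    {T₀ : Multiset (ℕ × ℕ)} (hi : 1 ≤ i) (hin : i ≤ n)
    (h : ColDominates n i m Q (T₀.map Prod.snd))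
    (hT₀ : ∀ z ∈ T₀, 1 ≤ z.1 ∧ z.1 ≤ 2 * n + 1 - i ∧ 2 ≤ z.2 ∧ z.2 ≤ 2 * n + 1 - i ∧
      z.1 ≠ z.2 ∧ inR n i (pairRoot n z)) :
    PairDominates n i m (fun B => Q B (T₀.map Prod.snd)) T₀ := by
  have hstart : PairDominates n i m (fun B => Q B (T₀.map Prod.snd))
      (T₀.map fun z => (1, z.2)) := by
    unfold ColDominates at h
    unfold PairDominates
    have hmap : (T₀.map fun z => (1, z.2)).map (pairRoot n)
        = (T₀.map Prod.snd).map fun y => pairRoot n (1, y) := by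
      rw [Multiset.map_map, Multiset.map_map]
      rfl
    rw [hmap]
    refine Dominates.mono h ?_
    rintro t - ⟨B, rfl, hB, hcard, hQ⟩
    refine ⟨B.map fun y => (1, y), by rw [Multiset.map_map]; rfl, fun z hz => ?_, ?_, ?_⟩
    · obtain ⟨y, hy, rfl⟩ := Multiset.mem_map.1 hz
      have := hB y hy
      dsimp only
      omega
    · rw [Multiset.map_map, Multiset.map_map]
      simp [Multiset.map_const', hcard]
    · rw [Multiset.map_map]
      simpa using hQ
  suffices H : PairDominates n i m (fun B => Q B (T₀.map Prod.snd)) (T₀.map id) by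
    rwa [Multiset.map_id] at H
  refine Multiset.map_induction (fun z hz B hB => ?_) hstart
  obtain ⟨a, b⟩ := z
  obtain ⟨ha, ha', hb, hb', hab, hR⟩ := hT₀ _ hz
  dsimp only [id] at *
  rcases ha.eq_or_lt with rfl | ha
  · exact hB
  · unfold PairDominates at hB ⊢
    rw [Multiset.map_cons (pairRoot n)] at hB ⊢
    have hroot : isBRoot n (1, a - 1) :=
      ⟨le_rfl, by dsimp only; omega, by dsimp only; omega, by dsimp only; omega⟩
    refine hB.dOp (fun f hf => dOp_mem_Ilam hroot hf)
      (rootDiff_pairRoot hin (by omega) (by omega) (by omega) (by omega) hab hR)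
      (fun x hx hx' => X_mem_Ilam m hx hx') (fun x hx => hx.isBRoot hin) hR ?_
    rintro t β γ ⟨T, ht, hT, hfst, hQ⟩ hβ hdiff hγ
    have hmem : β ∈ T.map (pairRoot n) := ht ▸ Multiset.mem_cons_self _ _
    obtain ⟨⟨x, y⟩, hxy, rfl⟩ := Multiset.mem_map.1 hmem
    obtain ⟨T, rfl⟩ := Multiset.exists_cons_of_mem hxy
    rw [Multiset.map_cons, Multiset.cons_inj_right] at ht
    subst ht
    obtain ⟨h1, h2, h3, h4⟩ := hT _ hxy
    dsimp only at h1 h2 h3 h4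
    obtain ⟨rfl, h6, rfl⟩ := hdiff.pairRoot_cases hin (by omega) ha' h1 h2 h3 hβ hγ
    refine ⟨(a, y) ::ₘ T, by rw [Multiset.map_cons], fun z hz => ?_, ?_, ?_⟩
    · rcases Multiset.mem_cons.1 hz with rfl | hz
      · exact ⟨ha', h2, h3, h6⟩
      · exact hT z (Multiset.mem_cons_of_mem hz)
    · rw [Multiset.map_cons, Multiset.map_cons, Multiset.cons_inj_right] at hfst
      rw [Multiset.map_cons, Multiset.map_cons, hfst]
    · simpa using hQ

/-- Starting from a power of `x_{-α_{1, 2n + 1 - c}}`, the letters `c` are moved to the letters of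
`l` one at a time. -/
lemma ColDominates.fill {n i m c : ℕ} {l : Multiset ℕ} (hi : 1 ≤ i) (hin : i ≤ n) (hc : 2 ≤ c)
    (hcn : c ≤ n) (hc' : c ≤ 2 * n + 1 - i)
    (h : MvPolynomial.X (1, 2 * n + 1 - c) ^ l.card ∈ Ilam n i m)
    (hl : ∀ w ∈ l, c ≤ w ∧ c + w ≤ 2 * n + 1 ∧ w ≤ 2 * n + 1 - i) :
    ColDominates n i m (fun B B₀ => B = B₀ ∨ 2 * n + 2 - c ∈ B) l := by
  have hstart := ColDominates.replicate (Q := fun B B₀ => B = B₀ ∨ 2 * n + 2 - c ∈ B)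
    hi hin hc hc' h fun _ => Or.inl rfl
  rw [← Multiset.map_const'] at hstart
  suffices H : ColDominates n i m (fun B B₀ => B = B₀ ∨ 2 * n + 2 - c ∈ B) (l.map id) by
    rwa [Multiset.map_id] at H
  refine Multiset.map_induction (fun w hw B₀ hB₀ => ?_) hstart
  obtain ⟨h1, h2, h3⟩ := hl w hw
  rcases h1.eq_or_lt with rfl | h1
  · exact hB₀
  · refine hB₀.move hi hin hc hcn h1 h2 (Or.inl ⟨rfl, rfl⟩) h3 ?_
    rintro B y y' - (⟨rfl, rfl⟩ | ⟨rfl, rfl⟩) hQ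
    · refine hQ.imp (fun h => ?_) fun h => ?_
      · rw [Multiset.cons_inj_right] at h
        rw [h, id]
      · rcases Multiset.mem_cons.1 h with h | h
        · omega
        · exact Multiset.mem_cons_of_mem h
    · exact Or.inr (Multiset.mem_cons_self _ _)

/-- The relation preserved by the operations used to move letters from `c` up to `z`. -/
def RangeRel (c z : ℕ) (B B₀ : Multiset ℕ) : Prop :=
  B.count c + B₀.count z = B₀.count c + B.count z ∧
  (c + 2 = z → B.count c + B.count (c + 1) + B.count z
      = B₀.count c + B₀.count (c + 1) + B₀.count z ∧
    ∀ k, k ≠ c → k ≠ c + 1 → k ≠ z → B.count k = B₀.count k) ∧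
  (c + 2 < z → B₀.count z + B₀.count (z - 1) < B.count z + B.count (z - 1) ∨
    B.count z + B.count (z - 1) = B₀.count z + B₀.count (z - 1) ∧
    B.count c + B.count (c + 1) = B₀.count c + B₀.count (c + 1) ∧
    ∀ k, k ≠ c → k ≠ c + 1 → k ≠ z - 1 → k ≠ z → B.count k = B₀.count k)

lemma RangeRel.move {c z w y y' y₀ y₀' : ℕ} {B B₀ : Multiset ℕ} (hcw : c < w) (hwz : w < z)
    (h : RangeRel c z (y ::ₘ B) (y₀ ::ₘ B₀))
    (hy : y = c ∧ y' = w ∨ y + w = c + z ∧ y' = z)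
    (hy₀ : y₀ = c ∧ y₀' = w ∨ w = c + 1 ∧ y₀ + 1 = z ∧ y₀' = z) :
    RangeRel c z (y' ::ₘ B) (y₀' ::ₘ B₀) := by
  have hB : ∀ k, (y' ::ₘ B).count k + (if k = y then 1 else 0)
      = (y ::ₘ B).count k + (if k = y' then 1 else 0) := fun k => by
    rw [Multiset.count_cons, Multiset.count_cons]; ring
  have hB₀ : ∀ k, (y₀' ::ₘ B₀).count k + (if k = y₀ then 1 else 0)
      = (y₀ ::ₘ B₀).count k + (if k = y₀' then 1 else 0) := fun k => by
    rw [Multiset.count_cons, Multiset.count_cons]; ring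
  obtain ⟨h1, h2, h3⟩ := h
  generalize y' ::ₘ B = C' at *
  generalize y ::ₘ B = C at *
  generalize y₀' ::ₘ B₀ = C₀' at *
  generalize y₀ ::ₘ B₀ = C₀ at *
  have hBc := hB c
  have hBz := hB z
  have hBc1 := hB (c + 1)
  have hBz1 := hB (z - 1)
  have hBc₀ := hB₀ c
  have hBz₀ := hB₀ z
  have hBc1₀ := hB₀ (c + 1)
  have hBz1₀ := hB₀ (z - 1)
  refine ⟨?_, fun hz => ?_, fun hz => ?_⟩
  · clear hBc1 hBc1₀ hBz1 hBz1₀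
    rcases hy with ⟨rfl, rfl⟩ | ⟨h4, rfl⟩ <;> rcases hy₀ with ⟨rfl, rfl⟩ | ⟨h5, h6, rfl⟩ <;>
      simp (disch := omega) only [if_true, if_neg] at * <;> omega
  · obtain ⟨h7, h8⟩ := h2 hz
    clear hBz1 hBz1₀
    refine ⟨?_, fun k k1 k2 k3 => ?_⟩
    · rcases hy with ⟨rfl, rfl⟩ | ⟨h4, rfl⟩ <;> rcases hy₀ with ⟨rfl, rfl⟩ | ⟨h5, h6, rfl⟩ <;>
        simp (disch := omega) only [if_true, if_pos, if_neg] at * <;> omega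
    · have e1 := hB k
      have e2 := hB₀ k
      have e3 := h8 k k1 k2 k3
      rw [if_neg (by omega), if_neg (by omega)] at e1 e2
      omega
  · clear h2
    rcases h3 hz with h7 | ⟨h7, h8, h9⟩
    · left
      clear hBc hBc1 hBc₀ hBc1₀ h3 h1 hB hB₀
      rcases (by omega : w + 1 = z ∨ w + 1 < z) with hw | hw <;>
      rcases hy with ⟨rfl, rfl⟩ | ⟨h4, rfl⟩ <;> rcases hy₀ with ⟨rfl, rfl⟩ | ⟨h5, h6, rfl⟩ <;>
        simp (disch := omega) only [if_true, if_pos, if_neg] at * <;> first | omega | grind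
    · by_cases hmid : c + 1 < w ∧ w + 1 < z ∧ y ≠ c
      · left
        clear hBc hBc1 hBc₀ hBc1₀ h3 h1 hB hB₀ h8 h9
        simp (disch := omega) only [if_pos, if_neg] at *
        omega
      · right
        refine ⟨?_, ?_, fun k k1 k2 k3 k4 => ?_⟩
        · clear hBc hBc1 hBc₀ hBc1₀ h3 h1 hB hB₀ h8 h9
          grind
        · clear hBz hBz1 hBz₀ hBz1₀ h3 h1 hB hB₀ h7 h9
          grind
        · have e1 := hB k
          have e2 := hB₀ k
          have e3 := h9 k k1 k2 k3 k4
          clear hBc hBc1 hBc₀ hBc1₀ hBz hBz1 hBz₀ hBz1₀ h3 h1 hB hB₀ h7 h8 h9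
          grind

lemma RangeRel.eq_or_colLarger {c z : ℕ} {B B₀ : Multiset ℕ} (hcz : c + 2 ≤ z)
    (h : RangeRel c z B B₀) (hB : ∀ y ∈ B, y ≤ z) (hB₀ : ∀ y ∈ B₀, c < y ∧ y ≤ z) :
    B = B₀ ∨ ColLarger B B₀ := by
  obtain ⟨h1, h2, h3⟩ := h
  have hc : B₀.count c = 0 :=
    Multiset.count_eq_zero_of_notMem fun h => (hB₀ c h).1.false
  have hgt : ∀ v, z < v → B.count v = B₀.count v := fun v hv => by
    rw [Multiset.count_eq_zero_of_notMem fun h => absurd (hB v h) (by omega),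
      Multiset.count_eq_zero_of_notMem fun h => absurd (hB₀ v h).2 (by omega)]
  by_cases hlt : B₀.count z < B.count z
  · exact Or.inr ⟨z, hlt, hgt⟩
  rcases hcz.eq_or_lt with hz | hz
  · obtain ⟨h4, h5⟩ := h2 hz
    refine Or.inl (Multiset.ext.2 fun k => ?_)
    grind
  · rcases h3 hz with h4 | ⟨h4, h5, h6⟩
    · refine Or.inr ⟨z - 1, by omega, fun v hv => ?_⟩
      rcases (by omega : v = z ∨ z < v) with rfl | hv
      · omega
      · exact hgt v hv
    · refine Or.inl (Multiset.ext.2 fun k => ?_)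
      grind

/-- The letters of `l` may take every value in `(i + 1, 2n + 1 - i]`: the letters `2n + 1 - i` are
reached through their predecessor, in a second round together with the letters `i + 2`. -/
lemma ColDominates.range {n i m c : ℕ} {l : Multiset ℕ} (hi : 1 ≤ i) (hc : c = i + 1)
    (hcn : c ≤ n) (h : MvPolynomial.X (1, 2 * n + 1 - c) ^ l.card ∈ Ilam n i m)
    (hl : ∀ w ∈ l, c < w ∧ w ≤ 2 * n + 1 - i) :
    ColDominates n i m (fun B B₀ => B = B₀ ∨ ColLarger B B₀) l := by
  have hin : i ≤ n := by omega
  obtain ⟨z, hz⟩ : ∃ z, z = 2 * n + 1 - i := ⟨_, rfl⟩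
  have step : ∀ {w y₀ y₀' B₀}, c < w → w < z →
      (y₀ = c ∧ y₀' = w ∨ w = c + 1 ∧ y₀ + 1 = z ∧ y₀' = z) →
      ColDominates n i m (RangeRel c z) (y₀ ::ₘ B₀) →
      ColDominates n i m (RangeRel c z) (y₀' ::ₘ B₀) := by
    intro w y₀ y₀' B₀ hcw hwz hy₀ hB₀
    refine hB₀.move hi hin (by omega) hcn hcw (by omega) (by unfold ColMove; omega) (by omega) ?_
    intro B y y' hy' hmove hQ
    unfold ColMove at hmove
    exact hQ.move hcw hwz (by omega) hy₀
  have hstart := ColDominates.replicate (Q := RangeRel c z) hi hin (by omega) (by omega) h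
    fun _ => ⟨rfl, fun _ => ⟨rfl, fun _ _ _ _ => rfl⟩,
      fun _ => Or.inr ⟨rfl, rfl, fun _ _ _ _ _ => rfl⟩⟩
  rw [← Multiset.map_const'] at hstart
  have hmid : ColDominates n i m (RangeRel c z)
      (l.map fun y => if y = z then z - 1 else if y = c + 1 then c else y) := by
    refine Multiset.map_induction (fun y hy B₀ hB₀ => ?_) hstart
    obtain ⟨h1, h2⟩ := hl y hy
    by_cases hyc : y ≠ z ∧ y = c + 1
    · rwa [if_neg hyc.1, if_pos hyc.2]
    · refine step ?_ ?_ (Or.inl ⟨rfl, rfl⟩) hB₀ <;> split_ifs <;> omega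
  have hend : ColDominates n i m (RangeRel c z) (l.map id) := by
    refine Multiset.map_induction (fun y hy B₀ hB₀ => ?_) hmid
    obtain ⟨h1, h2⟩ := hl y hy
    dsimp only [id]
    split_ifs at hB₀ with h3 h4
    · exact step (by omega : c < c + 1) (by omega) (by omega) hB₀
    · exact step (by omega : c < c + 1) (by omega) (by omega) hB₀
    · exact hB₀
  rw [Multiset.map_id] at hend
  exact hend.mono fun B hB _ hQ => hQ.eq_or_colLarger (by omega) (fun y hy => hz ▸ (hB y hy).2)
    fun y hy => hz ▸ hl y hy

lemma exists_straightening_of_colDominates {n i m : ℕ} {Q : Multiset ℕ → Multiset ℕ → Prop}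
    {s : (ℕ × ℕ) →₀ ℕ} {f : ℕ × ℕ → ℕ × ℕ} (hi : 1 ≤ i) (hin : i ≤ n)
    (h : ColDominates n i m Q ((Finsupp.toMultiset s).map fun β => (f β).2))
    (hR : ∀ β, s β ≠ 0 → inR n i β) (hf : ∀ β, s β ≠ 0 → pairRoot n (f β) = β)
    (hf' : ∀ β, s β ≠ 0 → 1 ≤ (f β).1 ∧ (f β).1 ≤ 2 * n + 1 - i ∧ 2 ≤ (f β).2 ∧
      (f β).2 ≤ 2 * n + 1 - i ∧ (f β).1 ≠ (f β).2)
    (hQ : ∀ B, (∀ y ∈ B, y ≤ 2 * n + 1 - i) →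
      Q B ((Finsupp.toMultiset s).map fun β => (f β).2) →
      B = ((Finsupp.toMultiset s).map fun β => (f β).2) ∨
      (∀ β, s β ≠ 0 → (f β).1 < (f β).2) ∧
        ColLarger B ((Finsupp.toMultiset s).map fun β => (f β).2))
    (hinc : ∀ β β', s β ≠ 0 → s β' ≠ 0 → (f β).1 < (f β).2 → (f β').1 < (f β).1 →
      (f β).2 ≤ (f β').2)
    (hdec : ∀ β β', s β ≠ 0 → s β' ≠ 0 → (f β).2 < (f β).1 → (f β').2 < (f β).2 →
      (f β).1 ≤ (f β').1) :
    ∃ g : MvPolynomial (ℕ × ℕ) ℂ, (∀ t ∈ g.support, expLT t s) ∧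
      (MvPolynomial.monomial s) 1 + g ∈ Ilam n i m := by
  have hmem : ∀ {z}, z ∈ (Finsupp.toMultiset s).map f → ∃ β, s β ≠ 0 ∧ f β = z := by
    intro z hz
    obtain ⟨β, hβ, rfl⟩ := Multiset.mem_map.1 hz
    rw [Finsupp.mem_toMultiset, Finsupp.mem_support_iff] at hβ
    exact ⟨β, hβ, rfl⟩
  have hsnd : ((Finsupp.toMultiset s).map f).map Prod.snd
      = (Finsupp.toMultiset s).map fun β => (f β).2 := by
    rw [Multiset.map_map]
    rfl
  have hroot : ((Finsupp.toMultiset s).map f).map (pairRoot n) = Finsupp.toMultiset s := by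
    rw [Multiset.map_map]
    refine (Multiset.map_congr rfl fun β hβ => ?_).trans (Multiset.map_id _)
    rw [Finsupp.mem_toMultiset, Finsupp.mem_support_iff] at hβ
    exact hf β hβ
  rw [← hsnd] at h
  have hpair := h.pairDominates hi hin fun z hz => by
    obtain ⟨β, hβ, rfl⟩ := hmem hz
    have := hf' β hβ
    exact ⟨this.1, this.2.1, this.2.2.1, this.2.2.2.1, this.2.2.2.2, (hf β hβ).symm ▸ hR β hβ⟩
  unfold PairDominates at hpair
  rw [hroot] at hpair
  refine hpair.exists_straightening ?_
  rintro t ⟨T, rfl, hT, hfst, hQT⟩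
  rw [hsnd] at hQT
  have key := expLT_of_margins (n := n) (T := T) (T₀ := (Finsupp.toMultiset s).map f)
    (fun z hz => by have := hT z hz; omega)
    (fun z hz => by
      obtain ⟨β, hβ, rfl⟩ := hmem hz
      have := hf' β hβ
      omega) hfst
    (by
      rw [hsnd]
      refine (hQ _ (fun y hy => ?_) hQT).imp_right (And.imp_left fun h z hz => ?_)
      · obtain ⟨z, hz, rfl⟩ := Multiset.mem_map.1 hy
        exact (hT z hz).2.2.1
      · obtain ⟨β, hβ, rfl⟩ := hmem hz
        exact h β hβ)
    (fun z hz z' hz' => by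
      obtain ⟨β, hβ, rfl⟩ := hmem hz
      obtain ⟨β', hβ', rfl⟩ := hmem hz'
      exact hinc β β' hβ hβ')
    (fun z hz z' hz' => by
      obtain ⟨β, hβ, rfl⟩ := hmem hz
      obtain ⟨β', hβ', rfl⟩ := hmem hz'
      exact hdec β β' hβ hβ')
  rw [hroot, Finsupp.toMultiset_toFinsupp] at key
  refine key.imp_left ?_
  rintro rfl
  exact hroot

lemma pairwise_of_isChain_rootStep {L : List (ℕ × ℕ)} (h : L.IsChain RootStep) :
    L.Pairwise fun a b => a.1 ≤ b.1 ∧ a.2 ≤ b.2 ∧ a.1 + a.2 < b.1 + b.2 := by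
  have h' : L.IsChain fun a b => a.1 ≤ b.1 ∧ a.2 ≤ b.2 ∧ a.1 + a.2 < b.1 + b.2 :=
    h.imp fun a b hab => by unfold RootStep at hab; omega
  have : IsTrans (ℕ × ℕ) fun a b => a.1 ≤ b.1 ∧ a.2 ≤ b.2 ∧ a.1 + a.2 < b.1 + b.2 :=
    ⟨fun a b c _ _ => by omega⟩
  exact h'.pairwise

lemma nodup_of_isChain_rootStep {L : List (ℕ × ℕ)} (h : L.IsChain RootStep) : L.Nodup :=
  (pairwise_of_isChain_rootStep h).imp fun h => by
    rintro rfl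
    omega

lemma snd_le_of_isChain_rootStep {L : List (ℕ × ℕ)} (h : L.IsChain RootStep) {a b : ℕ × ℕ}
    (ha : a ∈ L) (hb : b ∈ L) (hab : a.1 < b.1) : a.2 ≤ b.2 := by
  have hL := pairwise_of_isChain_rootStep h
  have key := List.Pairwise.forall_of_forall_of_flip
    (R := fun a b : ℕ × ℕ => a.1 < b.1 → a.2 ≤ b.2) (l := L) (fun x _ hx => absurd hx (lt_irrefl _))
    (hL.imp fun hab _ => hab.2.1) (hL.imp fun hab hlt => absurd hab.1 (not_le.2 hlt))
  exact key ha hb hab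

lemma head_le_of_isChain_rootStep {L : List (ℕ × ℕ)} (h : L.IsChain RootStep) {a b : ℕ × ℕ}
    (ha : L.head? = some a) (hb : b ∈ L) : a.1 ≤ b.1 ∧ a.2 ≤ b.2 := by
  obtain ⟨L, rfl⟩ := List.head?_eq_some_iff.1 ha
  rcases List.mem_cons.1 hb with rfl | hb
  · exact ⟨le_rfl, le_rfl⟩
  · have := List.rel_of_pairwise_cons (pairwise_of_isChain_rootStep h) hb
    exact ⟨this.1, this.2.1⟩

lemma le_getLast_of_isChain_rootStep {L : List (ℕ × ℕ)} (h : L.IsChain RootStep) {a b : ℕ × ℕ}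
    (ha : L.getLast? = some a) (hb : b ∈ L) : b.1 ≤ a.1 ∧ b.2 ≤ a.2 := by
  obtain ⟨L, rfl⟩ := List.getLast?_eq_some_iff.1 ha
  rcases List.mem_append.1 hb with hb | hb
  · have := (List.pairwise_append.1 (pairwise_of_isChain_rootStep h)).2.2 b hb a (by simp)
    exact ⟨this.1, this.2.1⟩
  · rw [List.mem_singleton.1 hb]
    exact ⟨le_rfl, le_rfl⟩

lemma sum_map_eq_card_toMultiset {α : Type*} {L : List α} (hL : L.Nodup) {s : α →₀ ℕ}
    (hs : ∀ a, a ∉ L → s a = 0) : (L.map fun a => s a).sum = (Finsupp.toMultiset s).card := by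
  classical
  rw [Finsupp.card_toMultiset, Finsupp.sum_of_support_subset s (s := L.toFinset) ?_ _ (by simp),
    List.sum_toFinset _ hL]
  · rfl
  · intro a ha
    by_contra h
    exact Finsupp.mem_support_iff.1 ha (hs a fun h' => h (List.mem_toFinset.2 h'))

/-- if the multi-exponent `s` is supported on a Dyck path `p ∈ D` and
`∑_{β ∈ p} s_β > M_p(m·ω_i)`, then `X^s` plus a suitable linear combination of
`≺`-smaller monomials lies in the ideal `I_{m·ω_i}`. -/
theorem monomial_straightening (n i m : ℕ) (hn : 2 ≤ n) (hi1 : 1 ≤ i) (hin : i ≤ n)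
    (s : (ℕ × ℕ) →₀ ℕ)
    (hpath :
      (∃ L, IsType1 n i L ∧ (∀ β, β ∉ L → s β = 0) ∧
        m < (L.map fun β => s β).sum) ∨
      (∃ L1 L2, IsType2 n i L1 L2 ∧ (∀ β, ¬(β ∈ L1 ∨ β ∈ L2) → s β = 0) ∧
        m * cB n i < ((L1 ++ L2).map fun β => s β).sum)) :
    ∃ g : MvPolynomial (ℕ × ℕ) ℂ, (∀ t ∈ g.support, expLT t s) ∧
      (MvPolynomial.monomial s) 1 + g ∈ Ilam n i m := by
  rcases hpath with ⟨L, ⟨-, hchain, hR, hends⟩, hsupp, hsum⟩ |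
    ⟨L1, L2, ⟨j, hj1, hji, -, -, hch1, hch2, hR1, hR2, hh1, hh2, hl1, hl2, hdisj⟩, hsupp, hsum⟩
  · have hchain : L.IsChain RootStep := hchain
    have hmem : ∀ β, s β ≠ 0 → β ∈ L := fun β hβ => by
      by_contra h
      exact hβ (hsupp β h)
    rw [sum_map_eq_card_toMultiset (nodup_of_isChain_rootStep hchain) hsupp] at hsum
    have hi : i + 1 ≤ n ∧ ((∀ β ∈ L, β.2 + i + 1 ≤ 2 * n) ∨
        ∀ β ∈ L, i + 1 ≤ β.2 ∧ β.2 + i ≤ 2 * n) := by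
      rcases hends with ⟨hh, hl⟩ | ⟨hh, hl⟩
      · have h1 := hR _ (List.mem_of_getLast? hl)
        unfold inR at h1
        refine ⟨by omega, Or.inl fun β hβ => ?_⟩
        have h2 := le_getLast_of_isChain_rootStep hchain hl hβ
        omega
      · have h1 := head_le_of_isChain_rootStep hchain hh (List.mem_of_getLast? hl)
        refine ⟨by omega, Or.inr fun β hβ => ?_⟩
        have h2 := le_getLast_of_isChain_rootStep hchain hl hβ
        have h3 := head_le_of_isChain_rootStep hchain hh hβ
        omega
    obtain ⟨hin', hcol⟩ := hi
    have hX : MvPolynomial.X (1, 2 * n + 1 - (i + 1)) ^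
        ((Finsupp.toMultiset s).map fun β => 2 * n + 1 - β.2).card ∈ Ilam n i m := by
      rw [Multiset.card_map, show 2 * n + 1 - (i + 1) = 2 * n - i by omega]
      exact X_pow_mem_Ilam hsum
    have hletter : ∀ y ∈ (Finsupp.toMultiset s).map fun β => 2 * n + 1 - β.2,
        ∃ β ∈ L, y = 2 * n + 1 - β.2 := fun y hy => by
      obtain ⟨β, hβ, rfl⟩ := Multiset.mem_map.1 hy
      rw [Finsupp.mem_toMultiset, Finsupp.mem_support_iff] at hβ
      exact ⟨β, hmem β hβ, rfl⟩
    have hdom : ColDominates n i m (fun B B₀ => B = B₀ ∨ ColLarger B B₀)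
        ((Finsupp.toMultiset s).map fun β => 2 * n + 1 - β.2) := by
      rcases hcol with hcol | hcol
      · refine ColDominates.range hi1 rfl hin' hX fun y hy => ?_
        obtain ⟨β, hβ, rfl⟩ := hletter y hy
        have h1 := hR β hβ
        have h2 := hcol β hβ
        unfold inR at h1
        omega
      · have hbound : ∀ y ∈ (Finsupp.toMultiset s).map fun β => 2 * n + 1 - β.2,
            i + 1 ≤ y ∧ y ≤ 2 * n - i := fun y hy => by
          obtain ⟨β, hβ, rfl⟩ := hletter y hy
          have h2 := hcol β hβ
          omega
        refine (ColDominates.fill hi1 hin (by omega) hin' (by omega) hX fun y hy => ?_).mono ?_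
        · have := hbound y hy
          omega
        · intro B hB _ hQ
          refine hQ.imp_right fun hz => ⟨2 * n + 2 - (i + 1), ?_, fun v hv => ?_⟩
          · rw [Multiset.count_eq_zero_of_notMem fun h => absurd (hbound _ h) (by omega)]
            exact Multiset.count_pos.2 hz
          · rw [Multiset.count_eq_zero_of_notMem fun h => absurd (hB _ h) (by omega),
              Multiset.count_eq_zero_of_notMem fun h => absurd (hbound _ h) (by omega)]
    have hlt : ∀ β, s β ≠ 0 → β.1 < 2 * n + 1 - β.2 := fun β hβ => by
      have := (hR β (hmem β hβ)).2.2.2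
      omega
    refine exists_straightening_of_colDominates (f := fun β => (β.1, 2 * n + 1 - β.2)) hi1 hin hdom
      (fun β hβ => hR β (hmem β hβ)) (fun β hβ => ?_) (fun β hβ => ?_)
      (fun B _ hB => hB.imp_right fun h => ⟨hlt, h⟩) (fun β β' hβ hβ' _ h => ?_)
      (fun β β' hβ _ h => absurd h (hlt β hβ).le.not_gt)
    · have := hlt β hβ
      rw [pairRoot_of_le this.le]
      exact Prod.ext rfl (by dsimp only; omega)
    · have h1 := hlt β hβ
      have h2 := hR β (hmem β hβ)
      unfold inR at h2
      dsimp only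
      omega
    · have := snd_le_of_isChain_rootStep hchain (hmem β' hβ') (hmem β hβ) h
      dsimp only
      omega
  · have hch1 : L1.IsChain RootStep := hch1
    have hch2 : L2.IsChain RootStep := hch2
    have hmem : ∀ β, s β ≠ 0 → β ∈ L1 ∨ β ∈ L2 := fun β hβ => by
      by_contra h
      exact hβ (hsupp β h)
    have hnodup : (L1 ++ L2).Nodup :=
      List.Nodup.append (nodup_of_isChain_rootStep hch1) (nodup_of_isChain_rootStep hch2)
        fun x hx hx' => hdisj x ⟨hx, hx'⟩
    rw [sum_map_eq_card_toMultiset hnodup fun β hβ =>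
      hsupp β fun h => hβ (List.mem_append.2 h)] at hsum
    have hb1 : ∀ β ∈ L1, 1 ≤ β.1 ∧ β.1 ≤ j ∧ i ≤ β.2 ∧ β.2 + j ≤ 2 * n := fun β hβ => by
      have h1 := hR1 β hβ
      have h2 := le_getLast_of_isChain_rootStep hch1 hl1 hβ
      unfold inR at h1
      omega
    have hb2 : ∀ β ∈ L2, 2 ≤ β.1 ∧ β.1 ≤ j + 1 ∧ i ≤ β.2 ∧ β.2 + j + 1 ≤ 2 * n := fun β hβ => by
      have h1 := hR2 β hβ
      have h2 := le_getLast_of_isChain_rootStep hch2 hl2 hβ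
      have h3 := head_le_of_isChain_rootStep hch2 hh2 hβ
      unfold inR at h1
      omega
    classical
    set f : ℕ × ℕ → ℕ × ℕ := fun β =>
      if β ∈ L1 then (β.1, 2 * n + 1 - β.2) else (2 * n + 1 - β.2, β.1)
    have hcases : ∀ β, s β ≠ 0 → β ∈ L1 ∧ f β = (β.1, 2 * n + 1 - β.2) ∨
        β ∈ L2 ∧ f β = (2 * n + 1 - β.2, β.1) := fun β hβ => by
      by_cases h : β ∈ L1
      · exact Or.inl ⟨h, if_pos h⟩
      · exact Or.inr ⟨(hmem β hβ).resolve_left h, if_neg h⟩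
    have hbound : ∀ β, s β ≠ 0 → 1 ≤ (f β).1 ∧ (f β).1 ≤ 2 * n + 1 - i ∧ 2 ≤ (f β).2 ∧
        (f β).2 ≤ 2 * n + 1 - i ∧ (f β).1 ≠ (f β).2 := fun β hβ => by
      rcases hcases β hβ with ⟨h1, h2⟩ | ⟨h1, h2⟩ <;> rw [h2] <;> dsimp only
      · have := hb1 β h1
        omega
      · have := hb2 β h1
        omega
    have hX : MvPolynomial.X (1, 2 * n + 1 - 2) ^
        ((Finsupp.toMultiset s).map fun β => (f β).2).card ∈ Ilam n i m := by
      rw [Multiset.card_map]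
      exact X_highest_pow_mem_Ilam hsum
    have hdom := ColDominates.fill hi1 hin le_rfl hn (by omega) hX fun y hy => by
      obtain ⟨β, hβ, rfl⟩ := Multiset.mem_map.1 hy
      rw [Finsupp.mem_toMultiset, Finsupp.mem_support_iff] at hβ
      have := hbound β hβ
      omega
    refine exists_straightening_of_colDominates (f := f) hi1 hin hdom
      (fun β hβ => (hmem β hβ).elim (hR1 β) (hR2 β)) (fun β hβ => ?_) hbound
      (fun B hB hQ => Or.inl (hQ.resolve_right fun h => absurd (hB _ h) (by omega)))
      (fun β β' hβ hβ' h h' => ?_) (fun β β' hβ hβ' h h' => ?_)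
    · rcases hcases β hβ with ⟨h1, h2⟩ | ⟨h1, h2⟩ <;> rw [h2] <;> unfold pairRoot
      · have := hb1 β h1
        exact Prod.ext (by dsimp only; omega) (by dsimp only; omega)
      · have := hb2 β h1
        exact Prod.ext (by dsimp only; omega) (by dsimp only; omega)
    · rcases hcases β hβ with ⟨h1, h2⟩ | ⟨h1, h2⟩ <;>
        rcases hcases β' hβ' with ⟨h3, h4⟩ | ⟨h3, h4⟩ <;> simp only [h2, h4] at h h' ⊢
      · have := snd_le_of_isChain_rootStep hch1 h3 h1 h'
        omega
      · have := hb1 β h1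
        have := hb2 β' h3
        omega
      · have := hb2 β h1
        omega
      · have := hb2 β h1
        omega
    · rcases hcases β hβ with ⟨h1, h2⟩ | ⟨h1, h2⟩ <;>
        rcases hcases β' hβ' with ⟨h3, h4⟩ | ⟨h3, h4⟩ <;> simp only [h2, h4] at h h' ⊢
      · have := hb1 β h1
        omega
      · have := hb1 β h1
        omega
      · have := hb2 β h1
        have := hb1 β' h3
        omega
      · have := snd_le_of_isChain_rootStep hch2 h3 h1 h'
        omega
end

section
/- For every s in Z_{>=0}^6 with s not in S(lambda), there exist complex constants c_t such that X^s + sum_{t ≺ s} c_t X^t belongs to I_lambda; consequently the images of the monomials X^s with s in S(lambda) span the quotient ring S(n^-)/I_lambda as a complex vector space. -/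
/-- The six positive roots of `G₂` as vectors `(a, b) = a·α₁ + b·α₂` in the root
lattice, listed in the order `β₁ ≻ β₂ ≻ β₃ ≻ β₄ ≻ β₅ ≻ β₆`:
`β₁ = 3α₁+2α₂, β₂ = 3α₁+α₂, β₃ = 2α₁+α₂, β₄ = α₁+α₂, β₅ = α₂, β₆ = α₁`. -/
def g2vec : Fin 6 → ℤ × ℤ := ![(3, 2), (3, 1), (2, 1), (1, 1), (0, 1), (1, 0)]

/-- The coroot pairings `λ(β_j^∨)` for `λ = m₁ω₁ + m₂ω₂` in type `G₂`. -/
def g2pair (m1 m2 : ℕ) : Fin 6 → ℕ :=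
  ![m1 + 2 * m2, m1 + m2, 2 * m1 + 3 * m2, m1 + 3 * m2, m2, m1]

/-- The differential operator `∂_ν` for `G₂`: the unique `ℂ`-linear derivation of
`S(n⁻) = ℂ[x_{-β₁},…,x_{-β₆}]` with `∂_ν x_{-β} = x_{-(β-ν)}` if `β - ν ∈ R⁺`
(difference taken in the root lattice) and `∂_ν x_{-β} = 0` otherwise. -/
noncomputable def dG2 (ν : Fin 6) :
    Derivation ℂ (MvPolynomial (Fin 6) ℂ) (MvPolynomial (Fin 6) ℂ) :=
  MvPolynomial.mkDerivation ℂ fun j =>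
    letI := Classical.propDecidable
    if h : ∃ k, g2vec k = g2vec j - g2vec ν
    then MvPolynomial.X h.choose else 0

/-- The ideal `I_λ` for `G₂`: the smallest ideal of `S(n⁻)` containing
`x_{-β}^{λ(β^∨)+1}` for every positive root `β` and stable under every `∂_ν`. -/
noncomputable def IG2 (m1 m2 : ℕ) : Ideal (MvPolynomial (Fin 6) ℂ) :=
  sInf {I | (∀ j, MvPolynomial.X j ^ (g2pair m1 m2 j + 1) ∈ I) ∧
            (∀ ν, ∀ f ∈ I, dG2 ν f ∈ I)}

/-- The lattice points `S(λ)` of the `G₂` polytope `P(λ)` (coordinates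
`s 0 = s₁, …, s 5 = s₆`). -/
def SG2 (m1 m2 : ℕ) : Set (Fin 6 →₀ ℕ) :=
  {s | s 5 ≤ m1 ∧ s 4 ≤ m2 ∧
       s 1 + s 2 + s 5 ≤ m1 + m2 ∧
       s 2 + s 3 + s 5 ≤ m1 + m2 ∧
       s 3 + s 4 + s 5 ≤ m1 + m2 ∧
       s 0 + s 1 + s 2 + s 3 + s 4 ≤ m1 + 2 * m2 ∧
       s 1 + s 2 + s 3 + s 4 + s 5 ≤ m1 + 2 * m2}

/-- The homogeneous reverse lexicographic order on multi-exponents for `G₂`: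
`expLTG2 s t` means `s ≺ t`, i.e. `t ≻ s`: either the total degree of `s` is smaller,
or the degrees agree and `t_j < s_j` at the largest index `j` with `s_j ≠ t_j`. -/
def expLTG2 (s t : Fin 6 →₀ ℕ) : Prop :=
  (∑ j, s j) < (∑ j, t j) ∨
  ((∑ j, s j) = (∑ j, t j) ∧ ∃ j, t j < s j ∧ ∀ k, j < k → s k = t k)

/-- The derivation of `R[x₁,…,x₆]` sending `x_i` to `x_j` if `φ i = some j` and to `0` if
`φ i = none`. -/
noncomputable def arrowDer (R : Type*) [CommSemiring R] (φ : Fin 6 → Option (Fin 6)) :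
    Derivation R (MvPolynomial (Fin 6) R) (MvPolynomial (Fin 6) R) :=
  MvPolynomial.mkDerivation R fun i => (φ i).elim 0 MvPolynomial.X

namespace G2

open MvPolynomial

/-- The exponent vector with the given entries. -/
noncomputable def vec (a b c d e f : ℕ) : Fin 6 →₀ ℕ :=
  Finsupp.equivFunOnFinite.symm ![a, b, c, d, e, f]

@[simp] lemma vec_zero (a b c d e f : ℕ) : vec a b c d e f 0 = a := rfl
@[simp] lemma vec_one (a b c d e f : ℕ) : vec a b c d e f 1 = b := rfl
@[simp] lemma vec_two (a b c d e f : ℕ) : vec a b c d e f 2 = c := rfl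
@[simp] lemma vec_three (a b c d e f : ℕ) : vec a b c d e f 3 = d := rfl
@[simp] lemma vec_four (a b c d e f : ℕ) : vec a b c d e f 4 = e := rfl
@[simp] lemma vec_five (a b c d e f : ℕ) : vec a b c d e f 5 = f := rfl

lemma exponent_ext_iff {s t : Fin 6 →₀ ℕ} :
    s = t ↔ s 0 = t 0 ∧ s 1 = t 1 ∧ s 2 = t 2 ∧ s 3 = t 3 ∧ s 4 = t 4 ∧ s 5 = t 5 := by
  simp [DFunLike.ext_iff, Fin.forall_fin_succ]

/-! ### The order -/

lemma expLTG2_iff (s t : Fin 6 →₀ ℕ) : expLTG2 s t ↔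
    s 0 + s 1 + s 2 + s 3 + s 4 + s 5 < t 0 + t 1 + t 2 + t 3 + t 4 + t 5 ∨
    (s 0 + s 1 + s 2 + s 3 + s 4 + s 5 = t 0 + t 1 + t 2 + t 3 + t 4 + t 5 ∧
      (t 5 < s 5 ∨ s 5 = t 5 ∧ (t 4 < s 4 ∨ s 4 = t 4 ∧ (t 3 < s 3 ∨ s 3 = t 3 ∧
        (t 2 < s 2 ∨ s 2 = t 2 ∧ (t 1 < s 1 ∨ s 1 = t 1 ∧ t 0 < s 0)))))) := by
  have h : (∃ j, t j < s j ∧ ∀ k, j < k → s k = t k) ↔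
      (t 5 < s 5 ∨ s 5 = t 5 ∧ (t 4 < s 4 ∨ s 4 = t 4 ∧ (t 3 < s 3 ∨ s 3 = t 3 ∧
        (t 2 < s 2 ∨ s 2 = t 2 ∧ (t 1 < s 1 ∨ s 1 = t 1 ∧ t 0 < s 0))))) := by
    constructor
    · rintro ⟨j, hj, hk⟩
      have h1 := hk 1
      have h2 := hk 2
      have h3 := hk 3
      have h4 := hk 4
      have h5 := hk 5
      fin_cases j <;> simp at hj h1 h2 h3 h4 h5 <;> omega
    · intro h
      rcases h with h | ⟨h5, h | ⟨h4, h | ⟨h3, h | ⟨h2, h | ⟨h1, h⟩⟩⟩⟩⟩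
      · exact ⟨5, h, by simp [Fin.forall_fin_succ]⟩
      · exact ⟨4, h, by simp [Fin.forall_fin_succ, *]⟩
      · exact ⟨3, h, by simp [Fin.forall_fin_succ, *]⟩
      · exact ⟨2, h, by simp [Fin.forall_fin_succ, *]⟩
      · exact ⟨1, h, by simp [Fin.forall_fin_succ, *]⟩
      · exact ⟨0, h, by simp [Fin.forall_fin_succ, *]⟩
  rw [expLTG2, h, Fin.sum_univ_six, Fin.sum_univ_six]

lemma expLTG2_add_right {s t : Fin 6 →₀ ℕ} (h : expLTG2 s t) (u : Fin 6 →₀ ℕ) :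
    expLTG2 (s + u) (t + u) := by
  rw [expLTG2_iff] at h ⊢
  simp only [Finsupp.add_apply]
  omega

/-- An embedding of exponents into a lexicographic product of copies of `ℕ` under which
`expLTG2` becomes the strict order. -/
def lexKey (s : Fin 6 →₀ ℕ) : ℕ ×ₗ ℕ ×ₗ ℕ ×ₗ ℕ ×ₗ ℕ ×ₗ ℕ ×ₗ ℕ :=
  let d := s 0 + s 1 + s 2 + s 3 + s 4 + s 5
  toLex (d, toLex (d - s 5, toLex (d - s 4, toLex (d - s 3, toLex (d - s 2,
    toLex (d - s 1, d - s 0))))))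

lemma lexKey_lt {s t : Fin 6 →₀ ℕ} (h : expLTG2 s t) : lexKey s < lexKey t := by
  rw [expLTG2_iff] at h
  simp only [lexKey, Prod.Lex.toLex_lt_toLex]
  omega

lemma wellFounded_expLTG2 : WellFounded expLTG2 :=
  Subrelation.wf lexKey_lt (InvImage.wf lexKey wellFounded_lt)

/-! ### Supports of derivatives -/

/-- `Arrow φ s t` says that `X^t` occurs in the image of `X^s` under `arrowDer φ`. -/
def Arrow (φ : Fin 6 → Option (Fin 6)) (s t : Fin 6 →₀ ℕ) : Prop :=
  ∃ i j, φ i = some j ∧ s i ≠ 0 ∧ t = s - Finsupp.single i 1 + Finsupp.single j 1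

lemma mem_support_sum_nat {ι σ : Type*} (S : Finset ι) (f : ι → MvPolynomial σ ℕ) (t : σ →₀ ℕ) :
    t ∈ (∑ i ∈ S, f i).support ↔ ∃ i ∈ S, t ∈ (f i).support := by
  simp [mem_support_iff, coeff_sum, Finset.sum_eq_zero_iff]

lemma mem_support_arrowDer_monomial (φ : Fin 6 → Option (Fin 6)) (s t : Fin 6 →₀ ℕ) {n : ℕ}
    (hn : n ≠ 0) : t ∈ (arrowDer ℕ φ (monomial s n)).support ↔ Arrow φ s t := by
  rw [arrowDer, mkDerivation_monomial, Finsupp.sum_fintype _ _ (by simp), Finset.smul_sum,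
    mem_support_sum_nat, Arrow]
  refine exists_congr fun i => ?_
  cases h : φ i with
  | none => simp
  | some j =>
    simp only [Option.elim_some, smul_eq_mul, X, monomial_mul, mul_one, smul_monomial,
      mem_support_iff, coeff_monomial, Finset.mem_univ, true_and, Option.some.injEq]
    simp [hn, eq_comm, and_comm]

lemma mem_support_arrowDer (φ : Fin 6 → Option (Fin 6)) (F : MvPolynomial (Fin 6) ℕ)
    (t : Fin 6 →₀ ℕ) : t ∈ (arrowDer ℕ φ F).support ↔ ∃ s ∈ F.support, Arrow φ s t := by
  conv_lhs => rw [F.as_sum, map_sum, mem_support_sum_nat]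
  exact exists_congr fun s => and_congr_right fun hs =>
    mem_support_arrowDer_monomial φ s t (mem_support_iff.mp hs)

lemma map_arrowDer (φ : Fin 6 → Option (Fin 6)) (F : MvPolynomial (Fin 6) ℕ) :
    map (Nat.castRingHom ℂ) (arrowDer ℕ φ F) =
      arrowDer ℂ φ (map (Nat.castRingHom ℂ) F) := by
  induction F using MvPolynomial.induction_on with
  | C a => simp [arrowDer, ← algebraMap_eq]
  | add p q hp hq => simp [hp, hq]
  | mul_X p i hp =>
    have hX : map (Nat.castRingHom ℂ) (arrowDer ℕ φ (X i)) = arrowDer ℂ φ (X i) := by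
      cases h : φ i <;> simp [arrowDer, mkDerivation_X, h]
    simp [Derivation.leibniz, hp, hX]

/-! ### Operators preserving the ideal -/

variable {m1 m2 : ℕ}

lemma X_pow_mem (j : Fin 6) : X j ^ (g2pair m1 m2 j + 1) ∈ IG2 m1 m2 :=
  Ideal.mem_sInf.mpr fun {_} h => h.1 j

/-- The derivation `D` maps the ideal `IG2 m1 m2` into itself. -/
def Preserves (m1 m2 : ℕ) (D : Derivation ℂ (MvPolynomial (Fin 6) ℂ) (MvPolynomial (Fin 6) ℂ)) :
    Prop :=
  ∀ f ∈ IG2 m1 m2, D f ∈ IG2 m1 m2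

lemma preserves_dG2 (ν : Fin 6) : Preserves m1 m2 (dG2 ν) := fun f hf =>
  Ideal.mem_sInf.mpr fun {_} h => h.2 ν f (Ideal.mem_sInf.mp hf h)

variable {D E : Derivation ℂ (MvPolynomial (Fin 6) ℂ) (MvPolynomial (Fin 6) ℂ)}

lemma Preserves.lie (hD : Preserves m1 m2 D) (hE : Preserves m1 m2 E) :
    Preserves m1 m2 ⁅D, E⁆ := fun f hf => by
  rw [Derivation.commutator_apply]
  exact sub_mem (hD _ (hE _ hf)) (hE _ (hD _ hf))

lemma Preserves.add (hD : Preserves m1 m2 D) (hE : Preserves m1 m2 E) :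
    Preserves m1 m2 (D + E) := fun f hf => add_mem (hD f hf) (hE f hf)

lemma Preserves.smul (c : ℂ) (hD : Preserves m1 m2 D) : Preserves m1 m2 (c • D) := fun f hf => by
  rw [Derivation.smul_apply, smul_eq_C_mul]
  exact Ideal.mul_mem_left _ _ (hD f hf)

lemma g2vec_injective : Function.Injective g2vec := by
  decide

lemma dG2_X_eq_X {ν j k : Fin 6} (h : g2vec k = g2vec j - g2vec ν) :
    dG2 ν (X j) = X k := by
  have hex : ∃ k, g2vec k = g2vec j - g2vec ν := ⟨k, h⟩
  rw [dG2, mkDerivation_X, dif_pos hex, g2vec_injective (hex.choose_spec.trans h.symm)]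

lemma dG2_X_eq_zero {ν j : Fin 6} (h : ¬ ∃ k, g2vec k = g2vec j - g2vec ν) :
    dG2 ν (X j) = 0 := by
  rw [dG2, mkDerivation_X, dif_neg h]

lemma dG2_eq_arrowDer {ν : Fin 6} {φ : Fin 6 → Option (Fin 6)}
    (hsome : ∀ j k, φ j = some k → g2vec k = g2vec j - g2vec ν)
    (hnone : ∀ j, φ j = none → ∀ k, g2vec k ≠ g2vec j - g2vec ν) :
    dG2 ν = arrowDer ℂ φ := by
  refine MvPolynomial.derivation_ext fun j => ?_
  rw [arrowDer, mkDerivation_X]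
  cases h : φ j with
  | none => exact dG2_X_eq_zero (not_exists.mpr (hnone j h))
  | some k => exact dG2_X_eq_X (hsome j k h)

lemma preserves_two :
    Preserves m1 m2 (arrowDer ℂ ![some 3, some 5, none, none, none, none]) := by
  rw [← dG2_eq_arrowDer (ν := 2) (by decide) (by decide)]
  exact preserves_dG2 2

lemma preserves_three :
    Preserves m1 m2 (arrowDer ℂ ![some 2, none, some 5, none, none, none]) := by
  rw [← dG2_eq_arrowDer (ν := 3) (by decide) (by decide)]
  exact preserves_dG2 3

lemma preserves_four :
    Preserves m1 m2 (arrowDer ℂ ![some 1, none, none, some 5, none, none]) := by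
  rw [← dG2_eq_arrowDer (ν := 4) (by decide) (by decide)]
  exact preserves_dG2 4

lemma preserves_five :
    Preserves m1 m2 (arrowDer ℂ ![none, some 2, some 3, some 4, none, none]) := by
  rw [← dG2_eq_arrowDer (ν := 5) (by decide) (by decide)]
  exact preserves_dG2 5

/-- The derivation `x₁ ↦ x_{i+1}`, all other variables to `0`. -/
abbrev fromTop (i : Fin 6) : Fin 6 → Option (Fin 6) := ![some i, none, none, none, none, none]

lemma preserves_fromTop_two : Preserves m1 m2 (arrowDer ℂ (fromTop 2)) := by
  have h : arrowDer ℂ (fromTop 2) = (2⁻¹ : ℂ) •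
      (arrowDer ℂ ![some 2, none, some 5, none, none, none] +
        ⁅arrowDer ℂ ![none, some 2, some 3, some 4, none, none],
          arrowDer ℂ ![some 1, none, none, some 5, none, none]⁆) := by
    refine MvPolynomial.derivation_ext fun j => ?_
    fin_cases j <;>
      simp [arrowDer, mkDerivation_X, Derivation.commutator_apply, ← two_smul ℂ, smul_smul]
  rw [h]
  exact (preserves_three.add (preserves_five.lie preserves_four)).smul _

lemma preserves_fromTop_three : Preserves m1 m2 (arrowDer ℂ (fromTop 3)) := by
  have h : arrowDer ℂ (fromTop 3) =
      ⁅arrowDer ℂ ![none, some 2, some 3, some 4, none, none], arrowDer ℂ (fromTop 2)⁆ := by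
    refine MvPolynomial.derivation_ext fun j => ?_
    fin_cases j <;> simp [arrowDer, mkDerivation_X, Derivation.commutator_apply]
  rw [h]
  exact preserves_five.lie preserves_fromTop_two

lemma preserves_fromTop_four : Preserves m1 m2 (arrowDer ℂ (fromTop 4)) := by
  have h : arrowDer ℂ (fromTop 4) =
      ⁅arrowDer ℂ ![none, some 2, some 3, some 4, none, none], arrowDer ℂ (fromTop 3)⁆ := by
    refine MvPolynomial.derivation_ext fun j => ?_
    fin_cases j <;> simp [arrowDer, mkDerivation_X, Derivation.commutator_apply]
  rw [h]
  exact preserves_five.lie preserves_fromTop_three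

lemma preserves_fromTop_five : Preserves m1 m2 (arrowDer ℂ (fromTop 5)) := by
  have h : arrowDer ℂ (fromTop 5) =
      ⁅arrowDer ℂ ![some 1, none, none, some 5, none, none], arrowDer ℂ (fromTop 3)⁆ := by
    refine MvPolynomial.derivation_ext fun j => ?_
    fin_cases j <;> simp [arrowDer, mkDerivation_X, Derivation.commutator_apply]
  rw [h]
  exact preserves_four.lie preserves_fromTop_three

/-! ### Elements of the ideal with natural coefficients -/

/-- The ideal contains a polynomial with natural coefficients in which `X^s` occurs and all of
whose exponents lie in `T`. -/
def Occurs (m1 m2 : ℕ) (s : Fin 6 →₀ ℕ) (T : Set (Fin 6 →₀ ℕ)) : Prop :=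
  ∃ F : MvPolynomial (Fin 6) ℕ, map (Nat.castRingHom ℂ) F ∈ IG2 m1 m2 ∧
    s ∈ F.support ∧ ∀ t ∈ F.support, t ∈ T

lemma Occurs.arrow {φ : Fin 6 → Option (Fin 6)} {s s' : Fin 6 →₀ ℕ} {T T' : Set (Fin 6 →₀ ℕ)}
    (h : Occurs m1 m2 s T) (hφ : Preserves m1 m2 (arrowDer ℂ φ)) (hs : Arrow φ s s')
    (hT : ∀ t ∈ T, ∀ t', Arrow φ t t' → t' ∈ T') : Occurs m1 m2 s' T' := by
  obtain ⟨F, hF, hsF, hFT⟩ := h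
  refine ⟨arrowDer ℕ φ F, ?_, (mem_support_arrowDer φ F s').mpr ⟨s, hsF, hs⟩, fun t' ht' => ?_⟩
  · rw [map_arrowDer]
    exact hφ _ hF
  · obtain ⟨t, ht, htt'⟩ := (mem_support_arrowDer φ F t').mp ht'
    exact hT t (hFT t ht) t' htt'

lemma occurs_pow (j : Fin 6) {s : Fin 6 →₀ ℕ}
    (hs : s = Finsupp.single j (g2pair m1 m2 j + 1)) : Occurs m1 m2 s {s} := by
  subst hs
  refine ⟨X j ^ (g2pair m1 m2 j + 1), ?_, ?_, ?_⟩
  · simpa using X_pow_mem j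
  · simp [X_pow_eq_monomial]
  · simp [X_pow_eq_monomial, mem_support_iff, coeff_monomial, eq_comm]

/-- The monomial `X^s` is congruent modulo the ideal to a combination of smaller monomials. -/
def Straightens (m1 m2 : ℕ) (s : Fin 6 →₀ ℕ) : Prop :=
  ∃ g : MvPolynomial (Fin 6) ℂ, (∀ t ∈ g.support, expLTG2 t s) ∧
    (monomial s) 1 + g ∈ IG2 m1 m2

lemma Occurs.straightens {s : Fin 6 →₀ ℕ} {T : Set (Fin 6 →₀ ℕ)} (h : Occurs m1 m2 s T)
    (hT : ∀ t ∈ T, t ≠ s → expLTG2 t s) : Straightens m1 m2 s := by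
  obtain ⟨F, hF, hsF, hFT⟩ := h
  have hc : ((coeff s F : ℕ) : ℂ) ≠ 0 := Nat.cast_ne_zero.mpr (mem_support_iff.mp hsF)
  refine ⟨C ((coeff s F : ℕ) : ℂ)⁻¹ * map (Nat.castRingHom ℂ) F - monomial s 1, fun t ht => ?_, ?_⟩
  · rw [mem_support_iff, coeff_sub, coeff_C_mul, coeff_map, coeff_monomial] at ht
    by_cases hts : t = s
    · subst hts
      simp [hc] at ht
    · refine hT t (hFT t (mem_support_iff.mpr fun h0 => ht ?_)) hts
      simp [h0, Ne.symm hts]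
  · rw [add_sub_cancel]
    exact Ideal.mul_mem_left _ _ hF

lemma Straightens.mono {s s' : Fin 6 →₀ ℕ} (h : Straightens m1 m2 s) (hs : s ≤ s') :
    Straightens m1 m2 s' := by
  obtain ⟨u, rfl⟩ := exists_add_of_le hs
  obtain ⟨g, hg, hmem⟩ := h
  refine ⟨g * monomial u 1, fun t ht => ?_, ?_⟩
  · rw [mem_support_iff, coeff_mul_monomial'] at ht
    have hut : u ≤ t := by
      by_contra h
      simp [h] at ht
    have h := expLTG2_add_right (hg (t - u) (mem_support_iff.mpr fun h => by simp [h] at ht)) u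
    rwa [tsub_add_cancel_of_le hut] at h
  · have := Ideal.mul_mem_right (monomial u (1 : ℂ)) _ hmem
    rwa [add_mul, monomial_mul, one_mul] at this

/-! ### Exponents of total degree `m₁ + 2 m₂ + 1` -/

lemma Occurs.fromTop {i : Fin 6} (hφ : Preserves m1 m2 (arrowDer ℂ (fromTop i)))
    {s s' : Fin 6 →₀ ℕ} (h : Occurs m1 m2 s {s}) (hs : s 0 ≠ 0)
    (hs' : s' = s - Finsupp.single 0 1 + Finsupp.single i 1) : Occurs m1 m2 s' {s'} := by
  refine h.arrow hφ ⟨0, i, rfl, hs, hs'⟩ ?_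
  rintro t rfl t' ⟨k, j, hkj, -, rfl⟩
  fin_cases k <;> simp at hkj
  subst hkj
  simp [hs']

lemma occurs_first_two (a b : ℕ) (h : a + b = m1 + 2 * m2 + 1) :
    Occurs m1 m2 (vec a b 0 0 0 0) {vec a b 0 0 0 0} := by
  induction b generalizing a with
  | zero =>
    refine occurs_pow 0 ?_
    simp [exponent_ext_iff, g2pair]
    omega
  | succ b ih =>
    refine (ih (a + 1) (by omega)).arrow preserves_four
      ⟨0, 1, rfl, by simp, by simp [exponent_ext_iff]⟩ ?_
    rintro t rfl t' ⟨k, j, hkj, hk, rfl⟩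
    fin_cases k <;> simp at hkj hk
    subst hkj
    simp [exponent_ext_iff]

lemma occurs_of_degree_eq (a b c d e f : ℕ) (h : a + b + c + d + e + f = m1 + 2 * m2 + 1) :
    Occurs m1 m2 (vec a b c d e f) {vec a b c d e f} := by
  induction f generalizing a with
  | succ f ih =>
    exact (ih (a + 1) (by omega)).fromTop preserves_fromTop_five (by simp)
      (by simp [exponent_ext_iff])
  | zero =>
  induction e generalizing a with
  | succ e ih =>
    exact (ih (a + 1) (by omega)).fromTop preserves_fromTop_four (by simp)
      (by simp [exponent_ext_iff])
  | zero =>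
  induction d generalizing a with
  | succ d ih =>
    exact (ih (a + 1) (by omega)).fromTop preserves_fromTop_three (by simp)
      (by simp [exponent_ext_iff])
  | zero =>
  induction c generalizing a with
  | succ c ih =>
    exact (ih (a + 1) (by omega)).fromTop preserves_fromTop_two (by simp)
      (by simp [exponent_ext_iff])
  | zero => exact occurs_first_two a b h

/-! ### Exponents obtained from `x₂ ^ (m₁ + m₂ + 1)` -/

/-- The exponents `t` with `t₁ = 0`, `t₂ + t₃ + t₄ + t₅ = n`, `t₃ + 2 t₄ + 3 t₅ = w` and
`t₆ = c`. -/
def weightSet (n w c : ℕ) : Set (Fin 6 →₀ ℕ) :=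
  {t | t 0 = 0 ∧ t 1 + t 2 + t 3 + t 4 = n ∧ t 2 + 2 * t 3 + 3 * t 4 = w ∧ t 5 = c}

lemma weightSet_arrow_five {n w c : ℕ} {t t' : Fin 6 →₀ ℕ} (ht : t ∈ weightSet n w c)
    (h : Arrow ![none, some 2, some 3, some 4, none, none] t t') :
    t' ∈ weightSet n (w + 1) c := by
  obtain ⟨i, j, hij, hi, rfl⟩ := h
  fin_cases i <;> simp at hij hi <;> subst hij <;> simp [weightSet] at ht ⊢ <;> omega

lemma weightSet_arrow_two {n w c : ℕ} {t t' : Fin 6 →₀ ℕ} (ht : t ∈ weightSet (n + 1) w c)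
    (h : Arrow ![some 3, some 5, none, none, none, none] t t') :
    t' ∈ weightSet n w (c + 1) := by
  obtain ⟨i, j, hij, hi, rfl⟩ := h
  fin_cases i <;> simp at hij hi <;> subst hij <;> simp [weightSet] at ht ⊢ <;> omega

lemma weightSet_arrow_three {n w c : ℕ} {t t' : Fin 6 →₀ ℕ}
    (ht : t ∈ weightSet (n + 1) (w + 1) c)
    (h : Arrow ![some 2, none, some 5, none, none, none] t t') :
    t' ∈ weightSet n w (c + 1) := by
  obtain ⟨i, j, hij, hi, rfl⟩ := h
  fin_cases i <;> simp at hij hi <;> subst hij <;> simp [weightSet] at ht ⊢ <;> omega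

lemma weightSet_arrow_four {n w c : ℕ} {t t' : Fin 6 →₀ ℕ}
    (ht : t ∈ weightSet (n + 1) (w + 2) c)
    (h : Arrow ![some 1, none, none, some 5, none, none] t t') :
    t' ∈ weightSet n w (c + 1) := by
  obtain ⟨i, j, hij, hi, rfl⟩ := h
  fin_cases i <;> simp at hij hi <;> subst hij <;> simp [weightSet] at ht ⊢ <;> omega

lemma occurs_two_three (a b : ℕ) (h : a + b = m1 + m2 + 1) :
    Occurs m1 m2 (vec 0 a b 0 0 0) (weightSet (a + b) b 0) := by
  induction b generalizing a with
  | zero =>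
    have hs : vec 0 a 0 0 0 0 = Finsupp.single 1 (g2pair m1 m2 1 + 1) := by
      simp [exponent_ext_iff, g2pair]
      omega
    obtain ⟨F, hF, hsF, hT⟩ := occurs_pow 1 hs
    refine ⟨F, hF, hsF, fun t ht => ?_⟩
    rw [hT t ht]
    simp [weightSet]
  | succ b ih =>
    refine (ih (a + 1) (by omega)).arrow preserves_five
      ⟨1, 2, rfl, by simp, by simp [exponent_ext_iff]⟩ fun t ht t' htt' => ?_
    rw [show a + (b + 1) = a + 1 + b by omega]
    exact weightSet_arrow_five ht htt'

lemma occurs_three_four (a b : ℕ) (h : a + b = m1 + m2 + 1) :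
    Occurs m1 m2 (vec 0 0 a b 0 0) (weightSet (a + b) (a + 2 * b) 0) := by
  induction b generalizing a with
  | zero => simpa using occurs_two_three 0 a (by omega)
  | succ b ih =>
    refine (ih (a + 1) (by omega)).arrow preserves_five
      ⟨2, 3, rfl, by simp, by simp [exponent_ext_iff]⟩ fun t ht t' htt' => ?_
    rw [show a + (b + 1) = a + 1 + b by omega,
      show a + 2 * (b + 1) = a + 1 + 2 * b + 1 by omega]
    exact weightSet_arrow_five ht htt'

lemma occurs_four_five (a b : ℕ) (h : a + b = m1 + m2 + 1) :
    Occurs m1 m2 (vec 0 0 0 a b 0) (weightSet (a + b) (2 * a + 3 * b) 0) := by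
  induction b generalizing a with
  | zero => simpa using occurs_three_four 0 a (by omega)
  | succ b ih =>
    refine (ih (a + 1) (by omega)).arrow preserves_five
      ⟨3, 4, rfl, by simp, by simp [exponent_ext_iff]⟩ fun t ht t' htt' => ?_
    rw [show a + (b + 1) = a + 1 + b by omega,
      show 2 * a + 3 * (b + 1) = 2 * (a + 1) + 3 * b + 1 by omega]
    exact weightSet_arrow_five ht htt'

lemma occurs_two_three_six (a b c : ℕ) (h : a + b + c = m1 + m2 + 1) :
    Occurs m1 m2 (vec 0 a b 0 0 c) (weightSet (a + b) b c) := by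
  induction c generalizing a with
  | zero => exact occurs_two_three a b h
  | succ c ih =>
    refine (ih (a + 1) (by omega)).arrow preserves_two
      ⟨1, 5, rfl, by simp, by simp [exponent_ext_iff]⟩ fun t ht t' htt' => ?_
    rw [show a + 1 + b = a + b + 1 by omega] at ht
    exact weightSet_arrow_two ht htt'

lemma occurs_three_four_six (a b c : ℕ) (h : a + b + c = m1 + m2 + 1) :
    Occurs m1 m2 (vec 0 0 a b 0 c) (weightSet (a + b) (a + 2 * b) c) := by
  induction c generalizing a with
  | zero => exact occurs_three_four a b h
  | succ c ih =>
    refine (ih (a + 1) (by omega)).arrow preserves_three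
      ⟨2, 5, rfl, by simp, by simp [exponent_ext_iff]⟩ fun t ht t' htt' => ?_
    rw [show a + 1 + b = a + b + 1 by omega,
      show a + 1 + 2 * b = a + 2 * b + 1 by omega] at ht
    exact weightSet_arrow_three ht htt'

lemma occurs_four_five_six (a b c : ℕ) (h : a + b + c = m1 + m2 + 1) :
    Occurs m1 m2 (vec 0 0 0 a b c) (weightSet (a + b) (2 * a + 3 * b) c) := by
  induction c generalizing a with
  | zero => exact occurs_four_five a b h
  | succ c ih =>
    refine (ih (a + 1) (by omega)).arrow preserves_four
      ⟨3, 5, rfl, by simp, by simp [exponent_ext_iff]⟩ fun t ht t' htt' => ?_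
    rw [show a + 1 + b = a + b + 1 by omega,
      show 2 * (a + 1) + 3 * b = 2 * a + 3 * b + 2 by omega] at ht
    exact weightSet_arrow_four ht htt'

/-! ### Straightening -/

lemma straightens_of_singleton {s : Fin 6 →₀ ℕ} (h : Occurs m1 m2 s {s}) :
    Straightens m1 m2 s :=
  h.straightens fun _ ht hne => absurd ht hne

lemma straightens_two_three_six (a b c : ℕ) (h : a + b + c = m1 + m2 + 1) :
    Straightens m1 m2 (vec 0 a b 0 0 c) := by
  refine (occurs_two_three_six a b c h).straightens fun t ht hne => ?_
  simp [weightSet, exponent_ext_iff, expLTG2_iff] at ht hne ⊢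
  omega

lemma straightens_three_four_six (a b c : ℕ) (h : a + b + c = m1 + m2 + 1) :
    Straightens m1 m2 (vec 0 0 a b 0 c) := by
  refine (occurs_three_four_six a b c h).straightens fun t ht hne => ?_
  simp [weightSet, exponent_ext_iff, expLTG2_iff] at ht hne ⊢
  omega

lemma straightens_four_five_six (a b c : ℕ) (h : a + b + c = m1 + m2 + 1) :
    Straightens m1 m2 (vec 0 0 0 a b c) := by
  refine (occurs_four_five_six a b c h).straightens fun t ht hne => ?_
  simp [weightSet, exponent_ext_iff, expLTG2_iff] at ht hne ⊢
  omega

lemma vec_le {s : Fin 6 →₀ ℕ} {a b c d e f : ℕ} (h0 : a ≤ s 0) (h1 : b ≤ s 1) (h2 : c ≤ s 2)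
    (h3 : d ≤ s 3) (h4 : e ≤ s 4) (h5 : f ≤ s 5) : vec a b c d e f ≤ s := by
  intro i
  fin_cases i <;> assumption

lemma exists_le_le_le_add_eq {a b c n : ℕ} (h : n ≤ a + b + c) :
    ∃ a' ≤ a, ∃ b' ≤ b, ∃ c' ≤ c, a' + b' + c' = n :=
  ⟨min a n, by omega, min b (n - min a n), by omega, n - min a n - min b (n - min a n),
    by omega, by omega⟩

lemma straightens_of_degree_lt {s : Fin 6 →₀ ℕ}
    (h : m1 + 2 * m2 < s 0 + s 1 + s 2 + s 3 + s 4 + s 5) : Straightens m1 m2 s := by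
  obtain ⟨p, hp, q, hq, f, hf, hpqf⟩ := exists_le_le_le_add_eq
    (show m1 + 2 * m2 + 1 ≤ (s 0 + s 1 + s 2) + (s 3 + s 4) + s 5 by omega)
  obtain ⟨a, ha, b, hb, c, hc, habc⟩ := exists_le_le_le_add_eq hp
  obtain ⟨d, hd, e, he, z, hz, hdez⟩ := exists_le_le_le_add_eq (c := 0) hq
  exact (straightens_of_singleton (occurs_of_degree_eq a b c d e f (by omega))).mono
    (vec_le ha hb hc hd he hf)

lemma straightens_of_notMem {s : Fin 6 →₀ ℕ} (hs : s ∉ SG2 m1 m2) : Straightens m1 m2 s := by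
  by_cases h6 : m1 < s 5
  · exact (straightens_of_singleton (occurs_pow 5 rfl)).mono (Finsupp.single_le_iff.mpr h6)
  by_cases h5 : m2 < s 4
  · exact (straightens_of_singleton (occurs_pow 4 rfl)).mono (Finsupp.single_le_iff.mpr h5)
  by_cases h236 : m1 + m2 + 1 ≤ s 1 + s 2 + s 5
  · obtain ⟨a, ha, b, hb, c, hc, h⟩ := exists_le_le_le_add_eq h236
    exact (straightens_two_three_six a b c h).mono (vec_le zero_le ha hb zero_le zero_le hc)
  by_cases h346 : m1 + m2 + 1 ≤ s 2 + s 3 + s 5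
  · obtain ⟨a, ha, b, hb, c, hc, h⟩ := exists_le_le_le_add_eq h346
    exact (straightens_three_four_six a b c h).mono (vec_le zero_le zero_le ha hb zero_le hc)
  by_cases h456 : m1 + m2 + 1 ≤ s 3 + s 4 + s 5
  · obtain ⟨a, ha, b, hb, c, hc, h⟩ := exists_le_le_le_add_eq h456
    exact (straightens_four_five_six a b c h).mono (vec_le zero_le zero_le zero_le ha hb hc)
  refine straightens_of_degree_lt ?_
  simp only [SG2, Set.mem_ofPred_eq] at hs
  omega

/-! ### Spanning -/

/-- The span of the images of the monomials with exponent in `SG2 m1 m2`. -/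
noncomputable def goodSpan (m1 m2 : ℕ) :
    Submodule ℂ (MvPolynomial (Fin 6) ℂ ⧸ IG2 m1 m2) :=
  Submodule.span ℂ ((Ideal.Quotient.mk (IG2 m1 m2)) ''
    {p | ∃ s ∈ SG2 m1 m2, p = (monomial s) 1})

lemma mk_mem_goodSpan_of_support {p : MvPolynomial (Fin 6) ℂ}
    (h : ∀ t ∈ p.support, Ideal.Quotient.mk (IG2 m1 m2) (monomial t 1) ∈ goodSpan m1 m2) :
    Ideal.Quotient.mk (IG2 m1 m2) p ∈ goodSpan m1 m2 := by
  rw [p.as_sum, map_sum]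
  refine sum_mem fun t ht => ?_
  have := (goodSpan m1 m2).smul_mem (coeff t p) (h t ht)
  rwa [← Ideal.Quotient.mkₐ_eq_mk ℂ, ← map_smul, smul_monomial, smul_eq_mul, mul_one] at this

lemma mk_monomial_mem_goodSpan (s : Fin 6 →₀ ℕ) :
    Ideal.Quotient.mk (IG2 m1 m2) (monomial s 1) ∈ goodSpan m1 m2 := by
  induction s using wellFounded_expLTG2.induction with
  | _ s ih =>
  by_cases hs : s ∈ SG2 m1 m2
  · exact Submodule.subset_span ⟨_, ⟨s, hs, rfl⟩, rfl⟩
  · obtain ⟨g, hg, hmem⟩ := straightens_of_notMem hs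
    have h := Ideal.Quotient.eq_zero_iff_mem.mpr hmem
    rw [map_add] at h
    rw [eq_neg_of_add_eq_zero_left h]
    exact neg_mem (mk_mem_goodSpan_of_support fun t ht => ih t (hg t ht))

lemma goodSpan_eq_top : goodSpan m1 m2 = ⊤ := by
  refine eq_top_iff.mpr fun x _ => ?_
  obtain ⟨p, rfl⟩ := Ideal.Quotient.mk_surjective x
  exact mk_mem_goodSpan_of_support fun t _ => mk_monomial_mem_goodSpan t

end G2

/-- every monomial `X^s` with `s ∉ S(λ)` equals, modulo `I_λ`, a linear
combination of `≺`-smaller monomials; consequently the images of the monomials `X^s`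
with `s ∈ S(λ)` span the quotient `S(n⁻)/I_λ` as a `ℂ`-vector space. -/
theorem g2_straightening_and_spanning (m1 m2 : ℕ) :
    (∀ s : Fin 6 →₀ ℕ, s ∉ SG2 m1 m2 →
      ∃ g : MvPolynomial (Fin 6) ℂ, (∀ t ∈ g.support, expLTG2 t s) ∧
        (MvPolynomial.monomial s) 1 + g ∈ IG2 m1 m2) ∧
    Submodule.span ℂ
        ((Ideal.Quotient.mk (IG2 m1 m2)) ''
          {p | ∃ s ∈ SG2 m1 m2, p = (MvPolynomial.monomial s) 1}) = ⊤ :=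
  ⟨fun _ hs => G2.straightens_of_notMem hs, G2.goodSpan_eq_top⟩
end

section
/- Let n = 3 and i in {2,3}, and identify coordinates by beta_1 = alpha_{1,5}, beta_2 = alpha_{1,4}, beta_3 = alpha_{2,4}, beta_4 = alpha_{1,3}, beta_5 = alpha_{2,3}, beta_6 = alpha_{1,2}, beta_7 = alpha_{2,2}, beta_8 = alpha_{3,3}, beta_9 = alpha_{1,1}. For every nonnegative integer m, a point s = (s_1,...,s_9) in Z_{>=0}^9 lies in S(0,m,0) (when i = 2), respectively in S(0,0,m) (when i = 3), if and only if s_j = 0 for every index j with beta_j not in R_i^+ and the restricted vector (s_beta)_{beta in R_i^+} lies in S(D, m*omega_i); i.e., for lambda = m*omega_i with i ≠ 1 the 19-inequality polytope coincides with the Dyck-path polytope P(D, m*omega_i). -/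
open scoped Pointwise

/-- The set `S(m1,m2,m3)` of lattice points of the polytope `P(λ)` attached to the
dominant integral weight `λ = m1·ω₁ + m2·ω₂ + m3·ω₃` of the simple Lie algebra of
type `B₃`.  Coordinates: `s 0 = s₁, …, s 8 = s₉`. -/
def SB3 (m1 m2 m3 : ℕ) : Set (Fin 9 → ℕ) :=
  {s |
    s 1 + s 2 + s 3 + s 7 + s 8 ≤ m1 + m2 + m3 ∧
    s 2 + s 3 + s 4 + s 7 + s 8 ≤ m1 + m2 + m3 ∧
    s 3 + s 4 + s 5 + s 7 + s 8 ≤ m1 + m2 + m3 ∧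
    s 4 + s 5 + s 6 + s 7 + s 8 ≤ m1 + m2 + m3 ∧
    s 2 + s 4 + s 7 ≤ m2 + m3 ∧
    s 4 + s 6 + s 7 ≤ m2 + m3 ∧
    s 5 + s 6 + s 8 ≤ m1 + m2 ∧
    s 6 ≤ m2 ∧
    s 7 ≤ m3 ∧
    s 8 ≤ m1 ∧
    s 2 + s 3 + s 4 + s 5 + s 6 + s 7 + s 8 ≤ m1 + 2 * m2 + m3 ∧
    s 0 + s 1 + s 2 + s 3 + s 4 + s 6 + s 8 ≤ m1 + 2 * m2 + m3 ∧
    s 0 + s 2 + s 3 + s 4 + s 5 + s 6 + s 8 ≤ m1 + 2 * m2 + m3 ∧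
    s 1 + s 2 + s 3 + s 4 + s 6 + s 7 + s 8 ≤ m1 + 2 * m2 + m3 ∧
    s 0 + s 1 + s 2 + s 3 + s 4 + s 5 + s 6 + 2 * s 8 ≤ 2 * m1 + 2 * m2 + m3 ∧
    s 1 + s 2 + s 3 + s 4 + s 5 + s 6 + s 7 + 2 * s 8 ≤ 2 * m1 + 2 * m2 + m3 ∧
    s 0 + s 1 + 2 * (s 2 + s 3 + s 4) + s 5 + s 6 + s 7 + 2 * s 8 ≤ 2 * m1 + 3 * m2 + 2 * m3 ∧
    s 1 + 2 * (s 2 + s 3 + s 4) + s 5 + s 6 + 2 * (s 7 + s 8) ≤ 2 * m1 + 3 * m2 + 2 * m3 ∧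
    s 2 + s 3 + 2 * s 4 + s 5 + s 6 + 2 * s 7 + s 8 ≤ m1 + 2 * m2 + 2 * m3}


/-- The identification of the nine coordinates of the `B₃` polytope with roots:
`β₁ = α_{1,5}, β₂ = α_{1,4}, β₃ = α_{2,4}, β₄ = α_{1,3}, β₅ = α_{2,3},
`β₆ = α_{1,2}, β₇ = α_{2,2}, β₈ = α_{3,3}, β₉ = α_{1,1}`. -/
def idxB3 : Fin 9 → ℕ × ℕ :=
  ![(1, 5), (1, 4), (2, 4), (1, 3), (2, 3), (1, 2), (2, 2), (3, 3), (1, 1)]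

/-- `L` lists the roots of a path in `R_i^+` leading from `a` to `b`. -/
def IsRootPath (n i : ℕ) (a b : ℕ × ℕ) (L : List (ℕ × ℕ)) : Prop :=
  L.IsChain RootStep ∧ (∀ x ∈ L, inR n i x) ∧ L.head? = some a ∧ L.getLast? = some b

instance (n i : ℕ) (a : ℕ × ℕ) : Decidable (inR n i a) :=
  inferInstanceAs (Decidable (1 ≤ a.1 ∧ a.1 ≤ i ∧ i ≤ a.2 ∧ a.1 + a.2 ≤ 2 * n))

theorem isRootPath_of_not_inR {n i : ℕ} {a b : ℕ × ℕ} {L : List (ℕ × ℕ)} (ha : ¬ inR n i a) :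
    IsRootPath n i a b L ↔ False :=
  ⟨fun h => ha (h.2.1 a (List.mem_of_mem_head? h.2.2.1)), False.elim⟩

theorem isRootPath_iff {n i p q : ℕ} {b : ℕ × ℕ} {L : List (ℕ × ℕ)} (ha : inR n i (p, q)) :
    IsRootPath n i (p, q) b L ↔
      (L = [(p, q)] ∧ (p, q) = b) ∨
        (∃ L', IsRootPath n i (p, q + 1) b L' ∧ L = (p, q) :: L') ∨
        ∃ L', IsRootPath n i (p + 1, q) b L' ∧ L = (p, q) :: L' := by
  unfold IsRootPath
  constructor
  · rintro ⟨hc, hR, hh, hl⟩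
    match L, hc, hR, hh, hl with
    | [x], _, _, hh, hl => simp_all
    | x :: y :: L', hc, hR, hh, hl =>
      obtain rfl : x = (p, q) := by simpa using hh
      rw [List.isChain_cons_cons] at hc
      have hR' : ∀ z ∈ y :: L', inR n i z := fun z hz => hR z (List.mem_cons_of_mem _ hz)
      have hl' : (y :: L').getLast? = some b := by simpa [List.getLast?_cons_cons] using hl
      rcases hc with ⟨⟨h1, h2⟩ | ⟨h1, h2⟩, hc⟩
      · exact Or.inr (Or.inl ⟨_, ⟨hc, hR', by simp [Prod.ext_iff, h1, h2], hl'⟩, rfl⟩)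
      · exact Or.inr (Or.inr ⟨_, ⟨hc, hR', by simp [Prod.ext_iff, h1, h2], hl'⟩, rfl⟩)
  · have extend (c : ℕ × ℕ) (hs : RootStep (p, q) c) (L' : List (ℕ × ℕ))
        (h : L'.IsChain RootStep ∧ (∀ x ∈ L', inR n i x) ∧ L'.head? = some c ∧
          L'.getLast? = some b) :
        ((p, q) :: L').IsChain RootStep ∧ (∀ x ∈ (p, q) :: L', inR n i x) ∧
          ((p, q) :: L').head? = some (p, q) ∧ ((p, q) :: L').getLast? = some b := by
      obtain ⟨hc, hR, hh, hl⟩ := h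
      cases L' with
      | nil => simp at hh
      | cons y L' =>
        obtain rfl : y = c := by simpa using hh
        refine ⟨List.isChain_cons_cons.2 ⟨hs, hc⟩, ?_, rfl, ?_⟩
        · simpa [ha] using hR
        · simpa [List.getLast?_cons_cons] using hl
    rintro (⟨rfl, rfl⟩ | ⟨L', h, rfl⟩ | ⟨L', h, rfl⟩)
    · simp [ha]
    · exact extend (p, q + 1) (Or.inl ⟨rfl, rfl⟩) L' h
    · exact extend (p + 1, q) (Or.inr ⟨rfl, rfl⟩) L' h

theorem isType1_iff {n i : ℕ} {L : List (ℕ × ℕ)} :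
    IsType1 n i L ↔ IsRootPath n i (1, i) (i, 2 * n - i - 1) L ∨
      IsRootPath n i (1, i + 1) (i, 2 * n - i) L := by
  unfold IsType1 IsRootPath List.Chain'
  have : L.head? = some (1, i) ∨ L.head? = some (1, i + 1) → L ≠ [] := by
    rintro h rfl
    simp at h
  tauto

theorem isType2_iff {n i : ℕ} {L₁ L₂ : List (ℕ × ℕ)} :
    IsType2 n i L₁ L₂ ↔ ∃ j, 1 ≤ j ∧ j < i ∧ IsRootPath n i (1, i) (j, 2 * n - j) L₁ ∧
      IsRootPath n i (2, i) (j + 1, 2 * n - j - 1) L₂ ∧ ∀ x, ¬(x ∈ L₁ ∧ x ∈ L₂) := by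
  unfold IsType2 IsRootPath List.Chain'
  refine exists_congr fun j => ?_
  have h₁ : L₁.head? = some (1, i) → L₁ ≠ [] := by
    rintro h rfl
    simp at h
  have h₂ : L₂.head? = some (2, i) → L₂ ≠ [] := by
    rintro h rfl
    simp at h
  tauto

theorem isType1_three_two {L : List (ℕ × ℕ)} :
    IsType1 3 2 L ↔ L = [(1, 2), (1, 3), (2, 3)] ∨ L = [(1, 2), (2, 2), (2, 3)] ∨
      L = [(1, 3), (1, 4), (2, 4)] ∨ L = [(1, 3), (2, 3), (2, 4)] := by
  simp (disch := decide) [isType1_iff, isRootPath_iff, isRootPath_of_not_inR, or_assoc]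

theorem isType2_three_two {L₁ L₂ : List (ℕ × ℕ)} :
    IsType2 3 2 L₁ L₂ ↔
      L₁ = [(1, 2), (1, 3), (1, 4), (1, 5)] ∧ L₂ = [(2, 2), (2, 3), (2, 4)] := by
  have hj (j : ℕ) : 1 ≤ j ∧ j < 2 ↔ j = 1 := by omega
  simp only [isType2_iff, ← and_assoc, hj]
  simp (disch := decide) [isRootPath_iff, isRootPath_of_not_inR]
  rintro rfl rfl
  simp
  omega

theorem not_isType1_three_three {L : List (ℕ × ℕ)} : ¬ IsType1 3 3 L := by
  simp (disch := decide) [isType1_iff, isRootPath_iff, isRootPath_of_not_inR]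

theorem isType2_three_three {L₁ L₂ : List (ℕ × ℕ)} :
    IsType2 3 3 L₁ L₂ ↔
      (L₁ = [(1, 3), (1, 4), (1, 5)] ∧ L₂ = [(2, 3), (2, 4)]) ∨
        (L₁ = [(1, 3), (1, 4), (2, 4)] ∧ L₂ = [(2, 3), (3, 3)]) := by
  have hj (j : ℕ) : 1 ≤ j ∧ j < 3 ↔ j = 1 ∨ j = 2 := by omega
  simp only [isType2_iff, ← and_assoc, hj]
  simp (disch := decide) [isRootPath_iff, isRootPath_of_not_inR, or_and_right, exists_or]
  constructor
  · rintro (⟨h, -⟩ | ⟨h, -⟩ | ⟨⟨rfl, rfl⟩, h⟩)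
    · exact Or.inl h
    · exact Or.inr h
    · exact absurd (h 2 3) (by simp)
  · rintro (⟨rfl, rfl⟩ | ⟨rfl, rfl⟩)
    · refine Or.inl ⟨⟨rfl, rfl⟩, ?_⟩
      simp
      omega
    · refine Or.inr (Or.inl ⟨⟨rfl, rfl⟩, ?_⟩)
      simp
      omega

theorem idxB3_injective : Function.Injective idxB3 := by decide

/-- for `n = 3` and `i ∈ {2,3}`, the 19-inequality `B₃` polytope for
`λ = m·ω_i` coincides with the Dyck-path polytope `P(D, m·ω_i)`: a point `s` lies in
`S(0,m,0)` (resp. `S(0,0,m)`) iff `s_j = 0` whenever `β_j ∉ R_i⁺` and the restriction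
of `s` to `R_i⁺` lies in `S(D, m·ω_i)`. -/
theorem SB3_eq_SD (i m : ℕ) (hi : i = 2 ∨ i = 3) (s : Fin 9 → ℕ) :
    s ∈ SB3 0 (if i = 2 then m else 0) (if i = 3 then m else 0) ↔
      ((∀ j, ¬ inR 3 i (idxB3 j) → s j = 0) ∧
        ∃ t ∈ SD 3 i m, ∀ j, t (idxB3 j) = s j) := by
  have ht : ∀ j, Function.extend idxB3 s 0 (idxB3 j) = s j :=
    idxB3_injective.extend_apply s 0
  have hsupp (hs : ∀ j, ¬ inR 3 i (idxB3 j) → s j = 0) (β : ℕ × ℕ) (hβ : ¬ inR 3 i β) :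
      Function.extend idxB3 s 0 β = 0 := by
    by_cases h : ∃ j, idxB3 j = β
    · obtain ⟨j, rfl⟩ := h
      rw [ht, hs j hβ]
    · exact Function.extend_apply' _ _ _ h
  generalize Function.extend idxB3 s 0 = t at ht hsupp
  rcases hi with rfl | rfl
  · constructor
    · intro h
      simp [SB3] at h
      have hs : ∀ j, ¬ inR 3 2 (idxB3 j) → s j = 0 := by
        simp [Fin.forall_fin_succ, idxB3, inR]
        omega
      refine ⟨hs, t, ⟨hsupp hs, ?_, ?_⟩, ht⟩
      · simp [Fin.forall_fin_succ, idxB3] at ht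
        simp [isType1_three_two, ht]
        omega
      · simp [Fin.forall_fin_succ, idxB3] at ht
        simp [isType2_three_two, ht, cB]
        omega
    · rintro ⟨hs, t, ⟨-, h1, h2⟩, ht⟩
      simp [Fin.forall_fin_succ, idxB3, inR] at ht hs
      simp [isType1_three_two, ht] at h1
      simp [isType2_three_two, ht, cB] at h2
      simp [SB3]
      omega
  · constructor
    · intro h
      simp [SB3] at h
      have hs : ∀ j, ¬ inR 3 3 (idxB3 j) → s j = 0 := by
        simp [Fin.forall_fin_succ, idxB3, inR]
        omega
      refine ⟨hs, t, ⟨hsupp hs, fun L hL => absurd hL not_isType1_three_three, ?_⟩, ht⟩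
      simp [Fin.forall_fin_succ, idxB3] at ht
      rintro L₁ L₂ hL
      rcases isType2_three_three.1 hL with ⟨rfl, rfl⟩ | ⟨rfl, rfl⟩ <;> simp [ht, cB] <;> omega
    · rintro ⟨hs, t, ⟨-, -, h2⟩, ht⟩
      simp [Fin.forall_fin_succ, idxB3, inR] at ht hs
      have h3 := h2 _ _ (isType2_three_three.2 (Or.inl ⟨rfl, rfl⟩))
      have h4 := h2 _ _ (isType2_three_three.2 (Or.inr ⟨rfl, rfl⟩))
      simp [ht, cB] at h3 h4
      simp [SB3]
      omega
end
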